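/- arXiv:2003.02714 — 5 statements merged into one kernel-verified Lean document; each statement's English description precedes it below -/
import Mathlib

section
/- Every normal PO-dilator has a Kruskal derivative. -/
universe u

/-- A bundled partial order. -/
structure POrd : Type (u + 1) where
  carrier : Type u
  [str : PartialOrder carrier]

instance : CoeSort POrd.{u} (Type u) := ⟨POrd.carrier⟩
attribute [instance] POrd.str

def POrd.of (X : Type u) [PartialOrder X] : POrd.{u} := ⟨X⟩

/-- A quasi embedding of partial orders. -/
def QuasiEmb {X Y : Type*} [PartialOrder X] [PartialOrder Y] (f : X → Y) : Prop :=
  ∀ x y : X, f x ≤ f y → x ≤ y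

/-- An embedding of partial orders. -/
def IsEmb {X Y : Type*} [PartialOrder X] [PartialOrder Y] (f : X → Y) : Prop :=
  ∀ x y : X, x ≤ y ↔ f x ≤ f y

theorem quasiEmb_id {X : Type*} [PartialOrder X] : QuasiEmb (id : X → X) :=
  fun _ _ h => h

theorem QuasiEmb.comp {X Y Z : Type*} [PartialOrder X] [PartialOrder Y] [PartialOrder Z]
    {f : X → Y} {g : Y → Z} (hf : QuasiEmb f) (hg : QuasiEmb g) :
    QuasiEmb (g ∘ f) := fun x y h => hf x y (hg _ _ h)

/-- `LeFin a b` is the relation `a ≤ᶠⁱⁿ b` on subsets of a partial order. -/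
def LeFin {X : Type*} [PartialOrder X] (a b : Set X) : Prop :=
  ∀ x ∈ a, ∃ y ∈ b, x ≤ y

/-- A PO-dilator: an embedding-preserving functor on partial orders with quasi embeddings,
together with a natural finite support. -/
structure PODilator : Type (u + 1) where
  obj : POrd.{u} → POrd.{u}
  map : {X Y : POrd.{u}} → (f : X → Y) → QuasiEmb f → (obj X → obj Y)
  supp : {X : POrd.{u}} → obj X → Set X
  map_quasiEmb : ∀ {X Y : POrd.{u}} (f : X → Y) (hf : QuasiEmb f), QuasiEmb (map f hf)
  map_id : ∀ (X : POrd.{u}), map (id : X → X) quasiEmb_id = id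
  map_comp : ∀ {X Y Z : POrd.{u}} (f : X → Y) (g : Y → Z) (hf : QuasiEmb f) (hg : QuasiEmb g),
      map (g ∘ f) (hf.comp hg) = map g hg ∘ map f hf
  map_emb : ∀ {X Y : POrd.{u}} (f : X → Y) (hf : QuasiEmb f), IsEmb f → IsEmb (map f hf)
  supp_finite : ∀ {X : POrd.{u}} (σ : obj X), (supp σ).Finite
  supp_natural : ∀ {X Y : POrd.{u}} (f : X → Y) (hf : QuasiEmb f) (σ : obj X),
      supp (map f hf σ) = f '' supp σ
  supp_cond : ∀ {X Y : POrd.{u}} (f : X → Y) (hf : QuasiEmb f), IsEmb f →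
      ∀ σ : obj Y, supp σ ⊆ Set.range f → σ ∈ Set.range (map f hf)

/-- Normality of a PO-dilator. -/
def PODilator.IsNormal (W : PODilator.{u}) : Prop :=
  ∀ (X : POrd.{u}) (σ τ : W.obj X), σ ≤ τ → LeFin (W.supp σ) (W.supp τ)

/-- Well partial orders. -/
def IsWpo (X : Type*) [PartialOrder X] : Prop :=
  ∀ f : ℕ → X, ∃ i j : ℕ, i < j ∧ f i ≤ f j

/-- A WPO-dilator preserves well partial orders. -/
def PODilator.IsWPO (W : PODilator.{u}) : Prop :=
  ∀ X : POrd.{u}, IsWpo X → IsWpo (W.obj X)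

/-- Kruskal fixed point of `W` over `X`. -/
structure IsKruskalFP (W : PODilator.{u}) (X Z : POrd.{u})
    (ι : X → Z) (κ : W.obj Z → Z) : Prop where
  range_disjoint : Set.range ι ∩ Set.range κ = ∅
  iota_le : ∀ x y : X, ι x ≤ ι y → x ≤ y
  iota_kappa : ∀ (x : X) (τ : W.obj Z), ι x ≤ κ τ ↔ ∃ z ∈ W.supp τ, ι x ≤ z
  kappa_iota : ∀ (σ : W.obj Z) (y : X), ¬ κ σ ≤ ι y
  kappa_kappa : ∀ σ τ : W.obj Z, κ σ ≤ κ τ ↔ (σ ≤ τ ∨ ∃ z ∈ W.supp τ, κ σ ≤ z)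

/-- Condition (i) of Theorem 3.5. -/
structure KFPCondI (W : PODilator.{u}) (X Z : POrd.{u})
    (ι : X → Z) (κ : W.obj Z → Z) : Prop where
  range_union : Set.range ι ∪ Set.range κ = Set.univ
  iota_mono : ∀ x y : X, x ≤ y → ι x ≤ ι y
  height : ∃ h : Z → ℕ, ∀ (s : Z) (σ : W.obj Z), s ∈ W.supp σ → h s < h (κ σ)

/-- Initial Kruskal fixed points. -/
def IsInitialKFP (W : PODilator.{u}) (X Z : POrd.{u})
    (ι : X → Z) (κ : W.obj Z → Z) : Prop :=
  IsKruskalFP W X Z ι κ ∧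
  ∀ (Z' : POrd.{u}) (ι' : X → Z') (κ' : W.obj Z' → Z'), IsKruskalFP W X Z' ι' κ' →
    ∃! f : Z → Z', ∃ hf : QuasiEmb f, f ∘ ι = ι' ∧ f ∘ κ = κ' ∘ W.map f hf

/-- Kruskal derivative of a normal PO-dilator. -/
structure IsKruskalDeriv (W T : PODilator.{u})
    (ι : ∀ X : POrd.{u}, X → T.obj X)
    (κ : ∀ X : POrd.{u}, W.obj (T.obj X) → T.obj X) : Prop where
  normal : T.IsNormal
  initial : ∀ X : POrd.{u}, IsInitialKFP W X (T.obj X) (ι X) (κ X)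
  nat_iota : ∀ (X Y : POrd.{u}) (f : X → Y) (hf : QuasiEmb f),
      ι Y ∘ f = T.map f hf ∘ ι X
  nat_kappa : ∀ (X Y : POrd.{u}) (f : X → Y) (hf : QuasiEmb f),
      T.map f hf ∘ κ X = κ Y ∘ W.map (T.map f hf) (T.map_quasiEmb f hf)



theorem IsEmb.quasi {X Y : Type*} [PartialOrder X] [PartialOrder Y] {f : X → Y}
    (h : IsEmb f) : QuasiEmb f := fun x y => (h x y).2

theorem QuasiEmb.inj {X Y : Type*} [PartialOrder X] [PartialOrder Y] {f : X → Y}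
    (h : QuasiEmb f) : Function.Injective f := fun x y e =>
  le_antisymm (h x y e.le) (h y x e.ge)

/-- Rewriting along an equality of maps. -/
theorem PODilator.map_congr (W : PODilator.{u}) {X Y : POrd.{u}} {f g : X → Y}
    (hf : QuasiEmb f) (hg : QuasiEmb g) (h : f = g) (σ : W.obj X) :
    W.map f hf σ = W.map g hg σ := by
  subst h; rfl

theorem PODilator.map_map (W : PODilator.{u}) {X Y Z : POrd.{u}} {f : X → Y} {g : Y → Z}
    {k : X → Z} (hf : QuasiEmb f) (hg : QuasiEmb g) (hk : QuasiEmb k)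
    (h : ∀ x, g (f x) = k x) (σ : W.obj X) :
    W.map g hg (W.map f hf σ) = W.map k hk σ := by
  have : k = g ∘ f := funext fun x => (h x).symm
  subst this
  rw [W.map_comp f g hf hg]; rfl

/-! ### Colimits of chains of embeddings -/

section Colim

variable (Z : ℕ → POrd.{u}) (e : ∀ n, Z n → Z (n + 1))

def chainTr {n m : ℕ} (h : n ≤ m) : Z n → Z m :=
  Nat.leRecOn (C := fun k => (Z k : Type u)) h (fun {k} => e k)

theorem chainTr_self (n : ℕ) (a : Z n) : chainTr Z e (le_refl n) a = a :=
  Nat.leRecOn_self (C := fun k => (Z k : Type u)) a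

theorem chainTr_trans {n m k : ℕ} (h : n ≤ m) (h' : m ≤ k) (a : Z n) :
    chainTr Z e (h.trans h') a = chainTr Z e h' (chainTr Z e h a) :=
  Nat.leRecOn_trans (C := fun k => (Z k : Type u)) h h' a

theorem chainTr_succ {n m : ℕ} (h : n ≤ m) (a : Z n) :
    chainTr Z e (h.trans (Nat.le_succ m)) a = e m (chainTr Z e h a) :=
  Nat.leRecOn_succ (C := fun k => (Z k : Type u)) h a

theorem chainTr_emb (he : ∀ n, IsEmb (e n)) {n m : ℕ} (h : n ≤ m) (a b : Z n) :
    a ≤ b ↔ chainTr Z e h a ≤ chainTr Z e h b := by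
  induction m, h using Nat.le_induction with
  | base => rw [chainTr_self, chainTr_self]
  | succ m h ih =>
    rw [chainTr_succ Z e h, chainTr_succ Z e h, ih]
    exact he m _ _

/-- The disjoint union of a chain, without its default order. -/
def ChainSum : Type u := Σ n, (Z n : Type u)

theorem exists_colim (he : ∀ n, IsEmb (e n)) :
    ∃ (L : POrd.{u}) (i : ∀ n, Z n → L), (∀ n, IsEmb (i n)) ∧
      (∀ n a, i (n + 1) (e n a) = i n a) ∧ ∀ z, ∃ n a, i n a = z := by
  let P : Preorder (ChainSum Z) :=
    { le := fun p q => ∃ k, ∃ (hp : p.1 ≤ k) (hq : q.1 ≤ k),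
        chainTr Z e hp p.2 ≤ chainTr Z e hq q.2
      le_refl := fun p => ⟨p.1, le_refl _, le_refl _, le_refl _⟩
      le_trans := by
        rintro p q r ⟨k, hp, hq, h⟩ ⟨l, hq', hr, h'⟩
        refine ⟨max k l, hp.trans (le_max_left _ _), hr.trans (le_max_right _ _), ?_⟩
        rw [chainTr_trans Z e hp (le_max_left _ _), chainTr_trans Z e hr (le_max_right _ _)]
        refine le_trans ((chainTr_emb Z e he _ _ _).1 h) ?_
        rw [← chainTr_trans]
        have := (chainTr_emb Z e he (le_max_right k l) _ _).1 h'
        rwa [← chainTr_trans] at this }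
  let i : ∀ n, Z n → Antisymmetrization (ChainSum Z) (· ≤ ·) :=
    fun n a => toAntisymmetrization (· ≤ ·) ⟨n, a⟩
  refine ⟨POrd.of (Antisymmetrization (ChainSum Z) (· ≤ ·)), i, ?_, ?_, ?_⟩
  · intro n a b
    constructor
    · intro h
      exact ⟨n, le_refl _, le_refl _, (chainTr_emb Z e he _ _ _).1 h⟩
    · rintro ⟨k, h1, h2, h⟩
      exact (chainTr_emb Z e he h1 _ _).2 h
  · intro n a
    have h : chainTr Z e (Nat.le_succ n) a = e n a := by
      have := chainTr_succ Z e (le_refl n) a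
      rwa [chainTr_self] at this
    apply Quotient.sound
    constructor
    · exact ⟨n + 1, le_refl _, Nat.le_succ n, by
        rw [chainTr_self]; exact h.ge⟩
    · exact ⟨n + 1, Nat.le_succ n, le_refl _, by
        rw [chainTr_self]; exact h.le⟩
  · intro z
    induction z using Quotient.inductionOn with
    | h p => exact ⟨p.1, p.2, rfl⟩

variable {Z e}

theorem colim_raise {L : POrd.{u}} {i : ∀ n, Z n → L}
    (hc : ∀ n a, i (n + 1) (e n a) = i n a) {n m : ℕ} (h : n ≤ m) (a : Z n) :
    i m (chainTr Z e h a) = i n a := by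
  induction m, h using Nat.le_induction with
  | base => rw [chainTr_self]
  | succ m h ih => rw [chainTr_succ Z e h, hc, ih]

theorem colim_lift {L : POrd.{u}} {i : ∀ n, Z n → L} (hi : ∀ n, IsEmb (i n))
    (hc : ∀ n a, i (n + 1) (e n a) = i n a) (hs : ∀ z, ∃ n a, i n a = z)
    {L' : POrd.{u}} (f : ∀ n, Z n → L') (hf : ∀ n, QuasiEmb (f n))
    (hfc : ∀ n a, f (n + 1) (e n a) = f n a) :
    ∃ g : L → L', QuasiEmb g ∧ ∀ n a, g (i n a) = f n a := by
  choose N A hA using hs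
  have key : ∀ n a, f (N (i n a)) (A (i n a)) = f n a := by
    intro n a
    rw [← colim_raise hfc (le_max_left (N (i n a)) n), ← colim_raise hfc (le_max_right (N (i n a)) n)]
    congr 1
    apply (hi _).quasi.inj
    rw [colim_raise hc, colim_raise hc, hA]
  refine ⟨fun z => f (N z) (A z), ?_, key⟩
  intro z w h
  rw [← hA z, ← hA w]
  simp only at h
  rw [← colim_raise hfc (le_max_left (N z) (N w)),
    ← colim_raise hfc (le_max_right (N z) (N w)) (A w)] at h
  rw [← colim_raise hc (le_max_left (N z) (N w)),
    ← colim_raise hc (le_max_right (N z) (N w)) (A w)]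
  exact (hi _ _ _).1 (hf _ _ _ h)

end Colim

/-! ### One step of the construction -/

inductive KLe (W : PODilator.{u}) (X B : POrd.{u}) (e : B → X ⊕ W.obj B) :
    X ⊕ W.obj B → X ⊕ W.obj B → Prop
  | inl (x y : X) : x ≤ y → KLe W X B e (Sum.inl x) (Sum.inl y)
  | inr (σ τ : W.obj B) : σ ≤ τ → KLe W X B e (Sum.inr σ) (Sum.inr τ)
  | sup (a : X ⊕ W.obj B) (τ : W.obj B) (z : B) : z ∈ W.supp τ → KLe W X B e a (e z) →
      KLe W X B e a (Sum.inr τ)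

section Step

variable {W : PODilator.{u}} {X B : POrd.{u}} {e : B → X ⊕ W.obj B}

theorem kle_inl {a : X ⊕ W.obj B} {y : X} :
    KLe W X B e a (Sum.inl y) ↔ ∃ x, a = Sum.inl x ∧ x ≤ y := by
  constructor
  · intro h
    cases h with
    | inl x y h => exact ⟨x, rfl, h⟩
  · rintro ⟨x, rfl, h⟩
    exact .inl _ _ h

theorem kle_inr {a : X ⊕ W.obj B} {τ : W.obj B} :
    KLe W X B e a (Sum.inr τ) ↔
      (∃ σ, a = Sum.inr σ ∧ σ ≤ τ) ∨ ∃ z ∈ W.supp τ, KLe W X B e a (e z) := by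
  constructor
  · intro h
    cases h with
    | inr σ τ h => exact Or.inl ⟨σ, rfl, h⟩
    | sup a τ z hz h => exact Or.inr ⟨z, hz, h⟩
  · rintro (⟨σ, rfl, h⟩ | ⟨z, hz, h⟩)
    · exact .inr _ _ h
    · exact .sup _ _ z hz h

theorem kle_refl (a : X ⊕ W.obj B) : KLe W X B e a a := by
  cases a with
  | inl x => exact .inl _ _ le_rfl
  | inr σ => exact .inr _ _ le_rfl

end Step

/-- Well-founded coalgebras carrying the Kruskal order. -/
structure KCoalg (W : PODilator.{u}) (X : POrd.{u}) where
  B : POrd.{u}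
  e : B → X ⊕ W.obj B
  he : ∀ b c, b ≤ c ↔ KLe W X B e (e b) (e c)
  ind : ∀ P : X ⊕ W.obj B → Prop, (∀ x, P (Sum.inl x)) →
    (∀ τ, (∀ z ∈ W.supp τ, P (e z)) → P (Sum.inr τ)) → ∀ a, P a

namespace KCoalg

variable {W : PODilator.{u}} {X : POrd.{u}} (C : KCoalg W X)

abbrev Le (a b : X ⊕ W.obj C.B) : Prop := KLe W X C.B C.e a b

theorem le_trans' (hW : W.IsNormal) : ∀ b a c, C.Le a b → C.Le b c → C.Le a c := by
  refine C.ind _ ?_ ?_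
  · intro x a c hab hbc
    obtain ⟨w, rfl, hw⟩ := kle_inl.1 hab
    generalize hb : (Sum.inl x : X ⊕ W.obj C.B) = b at hbc
    induction hbc with
    | inl x' y h =>
      cases hb
      exact .inl _ _ (hw.trans h)
    | inr σ τ h => cases hb
    | sup a τ z hz h ih =>
      subst hb
      exact .sup _ _ z hz (ih rfl)
  · intro σ ih a c hab hbc
    generalize hb : (Sum.inr σ : X ⊕ W.obj C.B) = b at hbc
    induction hbc with
    | inl x' y h => cases hb
    | inr σ' τ h =>
      cases hb
      rcases kle_inr.1 hab with ⟨ρ, rfl, hρ⟩ | ⟨z, hz, h'⟩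
      · exact .inr _ _ (hρ.trans h)
      · obtain ⟨w, hw, hzw⟩ := hW _ _ _ h z hz
        exact .sup _ _ w hw (ih z hz _ _ h' ((C.he _ _).1 hzw))
    | sup b τ z hz h ih' =>
      subst hb
      exact .sup _ _ z hz (ih' rfl)

theorem irrefl' (hW : W.IsNormal) : ∀ (a : X ⊕ W.obj C.B) (τ : W.obj C.B), a = Sum.inr τ → ∀ z ∈ W.supp τ,
    ¬ C.Le (Sum.inr τ) (C.e z) := by
  refine C.ind _ ?_ ?_
  · intro x τ h; cases h
  · intro τ ih τ' hτ z hz h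
    cases hτ
    have hzτ : C.Le (C.e z) (Sum.inr τ) := .sup _ _ z hz (kle_refl _)
    rcases hez : C.e z with y | ρ
    · rw [hez] at h
      obtain ⟨x, hx, _⟩ := kle_inl.1 h
      cases hx
    · have : ∃ w ∈ W.supp ρ, C.Le (Sum.inr ρ) (C.e w) := by
        rw [hez] at h
        rcases kle_inr.1 h with ⟨σ, hσ, hσρ⟩ | ⟨w, hw, h'⟩
        · cases hσ
          obtain ⟨w, hw, hzw⟩ := hW _ _ _ hσρ z hz
          exact ⟨w, hw, hez ▸ (C.he _ _).1 hzw⟩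
        · exact ⟨w, hw, C.le_trans' hW _ _ _ (hez ▸ hzτ) h'⟩
      obtain ⟨w, hw, h'⟩ := this
      exact ih z hz ρ hez w hw h'

theorem le_antisymm' (hW : W.IsNormal) (a b : X ⊕ W.obj C.B) (hab : C.Le a b) (hba : C.Le b a) :
    a = b := by
  rcases a with x | σ
  · rcases b with y | τ
    · obtain ⟨_, h1, h2⟩ := kle_inl.1 hab
      obtain ⟨_, h3, h4⟩ := kle_inl.1 hba
      cases h1; cases h3
      rw [le_antisymm h2 h4]
    · obtain ⟨_, h3, h4⟩ := kle_inl.1 hba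
      cases h3
  · rcases b with y | τ
    · obtain ⟨_, h3, h4⟩ := kle_inl.1 hab
      cases h3
    · rcases kle_inr.1 hab with ⟨_, h1, h2⟩ | ⟨z, hz, h⟩
      · rcases kle_inr.1 hba with ⟨_, h3, h4⟩ | ⟨z, hz, h⟩
        · cases h1; cases h3
          rw [le_antisymm h2 h4]
        · exact absurd (C.le_trans' hW _ _ _ hab h) (C.irrefl' hW _ σ rfl z hz)
      · exact absurd (C.le_trans' hW _ _ _ hba h) (C.irrefl' hW _ τ rfl z hz)

def nextOrd (hW : W.IsNormal) : POrd.{u} :=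
  @POrd.mk (X ⊕ W.obj C.B)
    { le := C.Le
      lt := fun a b => C.Le a b ∧ ¬ C.Le b a
      lt_iff_le_not_ge := fun _ _ => Iff.rfl
      le_refl := kle_refl
      le_trans := fun a b c => C.le_trans' hW b a c
      le_antisymm := C.le_antisymm' hW }

/-- The structure map as a map into the next stage. -/
def up (hW : W.IsNormal) : C.B → C.nextOrd hW := C.e

theorem up_emb (hW : W.IsNormal) : IsEmb (C.up hW) := C.he

def nextE (hW : W.IsNormal) : C.nextOrd hW → X ⊕ W.obj (C.nextOrd hW) :=
  fun a : X ⊕ W.obj C.B => Sum.map id (W.map (C.up hW) (C.up_emb hW).quasi) a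

def next (hW : W.IsNormal) : KCoalg W X where
  B := C.nextOrd hW
  e := C.nextE hW
  he := by
    intro a b
    constructor
    · intro h
      change C.Le a b at h
      induction h with
      | inl x y h => exact .inl _ _ h
      | inr σ τ h => exact .inr _ _ ((W.map_emb _ _ (C.up_emb hW) _ _).1 h)
      | sup a τ z hz h ih =>
        refine .sup _ _ (C.up hW z) ?_ ih
        rw [W.supp_natural]
        exact ⟨z, hz, rfl⟩
    · revert a
      refine C.ind (fun b => ∀ a : C.nextOrd hW,
        KLe W X (C.nextOrd hW) (C.nextE hW) (C.nextE hW a) (C.nextE hW b) → C.Le a b) ?_ ?_ b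
      · intro y a h
        obtain ⟨x, hx, hxy⟩ := kle_inl.1 h
        rcases a with x' | σ
        · cases hx
          exact .inl _ _ hxy
        · cases hx
      · intro τ ih a h
        rcases kle_inr.1 h with ⟨σ', hσ, hle⟩ | ⟨z', hz', h'⟩
        · rcases a with x' | σ
          · cases hσ
          · cases hσ
            exact .inr _ _ (W.map_quasiEmb _ _ _ _ hle)
        · rw [W.supp_natural] at hz'
          obtain ⟨z, hz, rfl⟩ := hz'
          exact .sup _ _ z hz (ih z hz a h')
  ind := by
    intro P h1 h2
    have key : ∀ b : C.nextOrd hW, P (C.nextE hW b) := by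
      refine C.ind (fun b => P (C.nextE hW b)) (fun x => h1 x) ?_
      intro τ ih
      apply h2
      intro z' hz'
      rw [W.supp_natural] at hz'
      obtain ⟨z, hz, rfl⟩ := hz'
      exact ih z hz
    rintro (x | τ)
    · exact h1 x
    · exact h2 τ fun z _ => key z

/-- The algebra map into a Kruskal fixed point on the next stage. -/
def ext' (hW : W.IsNormal) {Z' : POrd.{u}} (ι' : X → Z') (κ' : W.obj Z' → Z')
    (g : C.B → Z') (hg : QuasiEmb g) : (C.next hW).B → Z' :=
  fun a : X ⊕ W.obj C.B => Sum.elim ι' (fun σ => κ' (W.map g hg σ)) a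

theorem ext'_quasi (hW : W.IsNormal) {Z' : POrd.{u}} {ι' : X → Z'} {κ' : W.obj Z' → Z'}
    (hk : IsKruskalFP W X Z' ι' κ') (g : C.B → Z') (hg : QuasiEmb g)
    (hc : ∀ b, C.ext' hW ι' κ' g hg (C.up hW b) = g b) :
    QuasiEmb (C.ext' hW ι' κ' g hg) := by
  intro a b
  revert a
  refine C.ind (fun b => ∀ a : (C.next hW).B,
    C.ext' hW ι' κ' g hg a ≤ C.ext' hW ι' κ' g hg b → C.Le a b) ?_ ?_ b
  · intro y a h
    rcases a with x | σ
    · exact .inl _ _ (hk.iota_le _ _ h)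
    · exact absurd h (hk.kappa_iota _ _)
  · intro τ ih a h
    rcases a with x | σ
    · obtain ⟨z', hz', h'⟩ := (hk.iota_kappa _ _).1 h
      rw [W.supp_natural] at hz'
      obtain ⟨z, hz, rfl⟩ := hz'
      exact .sup _ _ z hz (ih z hz _ (by rw [← hc] at h'; exact h'))
    · rcases (hk.kappa_kappa _ _).1 h with h' | ⟨z', hz', h'⟩
      · exact .inr _ _ (W.map_quasiEmb _ _ _ _ h')
      · rw [W.supp_natural] at hz'
        obtain ⟨z, hz, rfl⟩ := hz'
        exact .sup _ _ z hz (ih z hz _ (by rw [← hc] at h'; exact h'))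

theorem ext'_compat (hW : W.IsNormal) {Z' : POrd.{u}} {ι' : X → Z'} {κ' : W.obj Z' → Z'}
    (g : C.B → Z') (hg : QuasiEmb g)
    (hc : ∀ b, C.ext' hW ι' κ' g hg (C.up hW b) = g b)
    (hg' : QuasiEmb (C.ext' hW ι' κ' g hg)) (b : (C.next hW).B) :
    (C.next hW).ext' hW ι' κ' (C.ext' hW ι' κ' g hg) hg' ((C.next hW).up hW b) =
      C.ext' hW ι' κ' g hg b := by
  rcases b with x | ρ
  · rfl
  · exact congrArg κ' (W.map_map _ _ _ hc ρ)

def emptyStage (W : PODilator.{u}) (X : POrd.{u}) : KCoalg W X where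
  B := POrd.of PEmpty
  e := fun z => PEmpty.elim z
  he := fun z => PEmpty.elim z
  ind := by
    rintro P h1 h2 (x | τ)
    · exact h1 x
    · exact h2 τ fun z => PEmpty.elim z

def stage (hW : W.IsNormal) (X : POrd.{u}) : ℕ → KCoalg W X
  | 0 => emptyStage W X
  | n + 1 => (stage hW X n).next hW

end KCoalg

namespace KCoalg

variable {W : PODilator.{u}} {X : POrd.{u}} (C : KCoalg W X) (hW : W.IsNormal)

def jl (x : X) : (C.next hW).B := (Sum.inl x : X ⊕ W.obj C.B)

def jr (σ : W.obj C.B) : (C.next hW).B := (Sum.inr σ : X ⊕ W.obj C.B)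

theorem j_cases (a : (C.next hW).B) : (∃ x, a = C.jl hW x) ∨ ∃ σ, a = C.jr hW σ := by
  rcases a with x | σ
  · exact Or.inl ⟨x, rfl⟩
  · exact Or.inr ⟨σ, rfl⟩

theorem jl_ne_jr (x : X) (σ : W.obj C.B) : C.jl hW x ≠ C.jr hW σ := fun h => by cases h

theorem jr_inj {σ τ : W.obj C.B} (h : C.jr hW σ = C.jr hW τ) : σ = τ := by cases h; rfl

theorem jl_le_jl {x y : X} : C.jl hW x ≤ C.jl hW y ↔ x ≤ y := by
  refine Iff.trans kle_inl ?_
  constructor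
  · rintro ⟨_, h, h'⟩
    cases h
    exact h'
  · intro h
    exact ⟨x, rfl, h⟩

theorem not_jr_le_jl {σ : W.obj C.B} {y : X} : ¬ C.jr hW σ ≤ C.jl hW y := by
  intro h
  obtain ⟨_, h, h'⟩ := kle_inl.1 h
  cases h

theorem jl_le_jr {x : X} {τ : W.obj C.B} :
    C.jl hW x ≤ C.jr hW τ ↔ ∃ z ∈ W.supp τ, C.jl hW x ≤ C.up hW z := by
  refine Iff.trans kle_inr ?_
  constructor
  · rintro (⟨_, h, h'⟩ | h)
    · cases h
    · exact h
  · exact Or.inr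

theorem jr_le_jr {σ τ : W.obj C.B} :
    C.jr hW σ ≤ C.jr hW τ ↔ σ ≤ τ ∨ ∃ z ∈ W.supp τ, C.jr hW σ ≤ C.up hW z := by
  refine Iff.trans kle_inr ?_
  constructor
  · rintro (⟨_, h, h'⟩ | h)
    · cases h
      exact Or.inl h'
    · exact Or.inr h
  · rintro (h | h)
    · exact Or.inl ⟨_, rfl, h⟩
    · exact Or.inr h

theorem up_jl (x : X) : (C.next hW).up hW (C.jl hW x) = (C.next hW).jl hW x := rfl

theorem up_jr (σ : W.obj C.B) : (C.next hW).up hW (C.jr hW σ) =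
    (C.next hW).jr hW (W.map (C.up hW) (C.up_emb hW).quasi σ) := rfl

end KCoalg

/-- The interface of the construction over a fixed `X`. -/
structure KPkg (W : PODilator.{u}) (X L : POrd.{u}) (ι : X → L) (κ : W.obj L → L) : Prop where
  initl : IsInitialKFP W X L ι κ
  mono : ∀ x y, x ≤ y → ι x ≤ ι y
  inj : Function.Injective κ
  ind : ∀ P : L → Prop, (∀ x, P (ι x)) → (∀ τ, (∀ z ∈ W.supp τ, P z) → P (κ τ)) → ∀ z, P z
  emb : ∀ (L' : POrd.{u}) (ι' : X → L') (κ' : W.obj L' → L'), IsKruskalFP W X L' ι' κ' →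
    (∀ x y, x ≤ y → ι' x ≤ ι' y) → ∀ (g : L → L') (hg : QuasiEmb g),
    g ∘ ι = ι' → g ∘ κ = κ' ∘ W.map g hg → IsEmb g

theorem exists_pkg (W : PODilator.{u}) (hW : W.IsNormal) (X : POrd.{u}) :
    ∃ (L : POrd.{u}) (ι : X → L) (κ : W.obj L → L), KPkg W X L ι κ := by
  let S : ℕ → KCoalg W X := KCoalg.stage hW X
  let e : ∀ n, (S n).B → (S (n + 1)).B := fun n => (S n).up hW
  have he : ∀ n, IsEmb (e n) := fun n => (S n).up_emb hW
  obtain ⟨L, i, hi, hc, hs⟩ := exists_colim (fun n => (S n).B) e he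
  let jl : ∀ n, X → (S (n + 1)).B := fun n => (S n).jl hW
  let jr : ∀ n, W.obj (S n).B → (S (n + 1)).B := fun n => (S n).jr hW
  have hq : ∀ n, QuasiEmb (i n) := fun n => (hi n).quasi
  -- every element of `L` occurs in a successor stage
  have hs' : ∀ z : L, ∃ n, (∃ x, z = i (n + 1) (jl n x)) ∨ ∃ σ, z = i (n + 1) (jr n σ) := by
    intro z
    obtain ⟨n, a, rfl⟩ := hs z
    refine ⟨n, ?_⟩
    rw [← hc]
    rcases (S n).j_cases hW (e n a) with ⟨x, hx⟩ | ⟨σ, hx⟩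
    · exact Or.inl ⟨x, by rw [hx]⟩
    · exact Or.inr ⟨σ, by rw [hx]⟩
  have hjl : ∀ n x, i (n + 1) (jl n x) = i 1 (jl 0 x) := by
    intro n x
    induction n with
    | zero => rfl
    | succ n ih => rw [← ih, ← hc (n + 1)]; rfl
  have hraise : ∀ n m, n ≤ m → ∀ σ : W.obj (S n).B, ∃ σ' : W.obj (S m).B,
      W.map (i m) (hq m) σ' = W.map (i n) (hq n) σ ∧ i (m + 1) (jr m σ') = i (n + 1) (jr n σ) := by
    intro n m h σ
    induction m, h using Nat.le_induction with
    | base => exact ⟨σ, rfl, rfl⟩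
    | succ m h ih =>
      obtain ⟨σ', h1, h2⟩ := ih
      refine ⟨W.map (e m) (he m).quasi σ', ?_, ?_⟩
      · rw [← h1]
        exact W.map_map _ _ _ (hc m) σ'
      · rw [← h2, ← hc (m + 1)]; rfl
  have hsur : ∀ σ : W.obj L, ∃ n, ∃ σ' : W.obj (S n).B, W.map (i n) (hq n) σ' = σ := by
    intro σ
    choose N A hA using hs
    obtain ⟨M, hM⟩ := ((W.supp_finite σ).image N).bddAbove
    obtain ⟨σ', h⟩ := W.supp_cond (i M) (hq M) (hi M) σ (by
      intro z hz
      refine ⟨chainTr _ e (hM ⟨z, hz, rfl⟩) (A z), ?_⟩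
      rw [colim_raise hc, hA])
    exact ⟨M, σ', h⟩
  have hwd : ∀ n m (σ : W.obj (S n).B) (τ : W.obj (S m).B),
      W.map (i n) (hq n) σ = W.map (i m) (hq m) τ → i (n + 1) (jr n σ) = i (m + 1) (jr m τ) := by
    intro n m σ τ h
    obtain ⟨σ', h1, h2⟩ := hraise n (max n m) (le_max_left _ _) σ
    obtain ⟨τ', h3, h4⟩ := hraise m (max n m) (le_max_right _ _) τ
    rw [← h2, ← h4]
    have : σ' = τ' := (W.map_quasiEmb _ (hq _)).inj (by rw [h1, h3, h])
    rw [this]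
  let ι : X → L := fun x => i 1 (jl 0 x)
  choose N A hA using hsur
  let κ : W.obj L → L := fun σ => i (N σ + 1) (jr (N σ) (A σ))
  have hι : ∀ n x, i (n + 1) (jl n x) = ι x := hjl
  have hκ : ∀ n σ, i (n + 1) (jr n σ) = κ (W.map (i n) (hq n) σ) := by
    intro n σ
    exact hwd _ _ _ _ (hA _).symm
  have hsur : ∀ σ : W.obj L, ∃ n, ∃ σ' : W.obj (S n).B, σ = W.map (i n) (hq n) σ' :=
    fun σ => ⟨N σ, A σ, (hA σ).symm⟩
  have hsur2 : ∀ σ τ : W.obj L, ∃ n, ∃ σ' τ' : W.obj (S n).B, σ = W.map (i n) (hq n) σ' ∧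
      τ = W.map (i n) (hq n) τ' := by
    intro σ τ
    obtain ⟨n, σ, rfl⟩ := hsur σ
    obtain ⟨m, τ, rfl⟩ := hsur τ
    obtain ⟨σ', h1, h2⟩ := hraise n (max n m) (le_max_left _ _) σ
    obtain ⟨τ', h3, h4⟩ := hraise m (max n m) (le_max_right _ _) τ
    exact ⟨_, σ', τ', h1.symm, h3.symm⟩
  clear_value κ ι
  clear hwd hraise hjl hA N A
  have hnup : ∀ n (z : (S n).B), i (n + 1) ((S n).up hW z) = i n z := hc
  have hle : ∀ n (a : (S (n + 1)).B) (z : (S n).B), a ≤ e n z ↔ i (n + 1) a ≤ i n z := by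
    intro n a z
    rw [← hc n z]
    exact hi _ _ _
  have hfp : IsKruskalFP W X L ι κ := by
    refine ⟨?_, ?_, ?_, ?_, ?_⟩
    · rw [Set.eq_empty_iff_forall_notMem]
      rintro _ ⟨⟨x, rfl⟩, ⟨σ, h⟩⟩
      obtain ⟨n, σ, rfl⟩ := hsur σ
      rw [← hκ, ← hι n] at h
      exact (S n).jl_ne_jr hW x σ ((hq _).inj h).symm
    · intro x y h
      rw [← hι 0, ← hι 0] at h
      exact ((S 0).jl_le_jl hW).1 (hq _ _ _ h)
    · intro x τ
      obtain ⟨n, τ, rfl⟩ := hsur τ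
      rw [← hκ, ← hι n, ← hi, W.supp_natural, Set.exists_mem_image]
      refine ((S n).jl_le_jr hW).trans ?_
      exact exists_congr fun z => and_congr_right fun _ => hle n _ z
    · intro σ y h
      obtain ⟨n, σ, rfl⟩ := hsur σ
      rw [← hκ, ← hι n, ← hi] at h
      exact (S n).not_jr_le_jl hW h
    · intro σ τ
      obtain ⟨n, σ, τ, rfl, rfl⟩ := hsur2 σ τ
      rw [← hκ, ← hκ, ← hi, W.supp_natural, Set.exists_mem_image,
        ← W.map_emb _ (hq n) (hi n) σ τ]
      refine ((S n).jr_le_jr hW).trans ?_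
      exact or_congr Iff.rfl (exists_congr fun z => and_congr_right fun _ => hle n _ z)
  have hempty : ∀ a : (S 0).B, False := fun a => PEmpty.elim a
  refine ⟨L, ι, κ, ⟨hfp, ?_⟩, ?_, ?_, ?_, ?_⟩
  · -- initiality
    intro Z' ι' κ' hk
    let G : ∀ n, { g : (S n).B → Z' // ∃ hg : QuasiEmb g,
        ∀ b, (S n).ext' hW ι' κ' g hg ((S n).up hW b) = g b } :=
      fun n => Nat.rec (motive := fun n => { g : (S n).B → Z' // ∃ hg : QuasiEmb g,
        ∀ b, (S n).ext' hW ι' κ' g hg ((S n).up hW b) = g b })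
        ⟨fun a => (hempty a).elim, fun a => (hempty a).elim, fun a => (hempty a).elim⟩
        (fun n g => ⟨(S n).ext' hW ι' κ' g.1 g.2.1,
          (S n).ext'_quasi hW hk g.1 g.2.1 g.2.2,
          (S n).ext'_compat hW g.1 g.2.1 g.2.2 _⟩) n
    have hG : ∀ n, (G (n + 1)).1 = (S n).ext' hW ι' κ' (G n).1 (G n).2.1 := fun n => rfl
    obtain ⟨f, hf, hfi⟩ := colim_lift hi hc hs (fun n => (G n).1) (fun n => (G n).2.1)
      (fun n a => (G n).2.2 a)
    refine ⟨f, ⟨hf, ?_, ?_⟩, ?_⟩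
    · funext x
      show f (ι x) = _
      rw [← hι 0, hfi]
      rfl
    · funext σ
      obtain ⟨n, σ, rfl⟩ := hsur σ
      show f (κ _) = κ' (W.map f hf _)
      rw [← hκ, hfi, hG, W.map_map (hq n) hf (G n).2.1 (hfi n)]
      rfl
    · rintro g ⟨hg, hg1, hg2⟩
      have key : ∀ n a, g (i n a) = f (i n a) := by
        intro n
        induction n with
        | zero => exact fun a => (hempty a).elim
        | succ n ih =>
          intro a
          rcases (S n).j_cases hW a with ⟨x, rfl⟩ | ⟨σ, rfl⟩
          · refine Eq.trans ?_ (hfi _ _).symm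
            refine (congrArg g (hι n x)).trans ?_
            exact congrFun hg1 x
          · refine Eq.trans ?_ (hfi _ _).symm
            refine (congrArg g (hκ n σ)).trans ?_
            refine (congrFun hg2 _).trans ?_
            refine congrArg κ' ?_
            exact W.map_map _ _ _ (fun a => (ih a).trans (hfi n a)) σ
      funext z
      obtain ⟨n, a, rfl⟩ := hs z
      exact key n a
  · intro x y h
    rw [← hι 0, ← hι 0, ← hi]
    exact ((S 0).jl_le_jl hW).2 h
  · intro σ τ h
    obtain ⟨n, σ, τ, rfl, rfl⟩ := hsur2 σ τ
    rw [← hκ, ← hκ] at h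
    rw [(S n).jr_inj hW ((hq _).inj h)]
  · intro P h1 h2
    have key : ∀ n a, P (i n a) := by
      intro n
      induction n with
      | zero => exact fun a => (hempty a).elim
      | succ n ih =>
        intro a
        rcases (S n).j_cases hW a with ⟨x, rfl⟩ | ⟨σ, rfl⟩
        · exact (hι n x).symm ▸ h1 x
        · refine (hκ n σ).symm ▸ h2 _ ?_
          intro z hz
          rw [W.supp_natural] at hz
          obtain ⟨z, _, rfl⟩ := hz
          exact ih z
    intro z
    obtain ⟨n, a, rfl⟩ := hs z
    exact key n a
  · intro L' ι' κ' hk hm g hg hg1 hg2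
    have g1 : ∀ x, g (ι x) = ι' x := congrFun hg1
    have g2 : ∀ σ, g (κ σ) = κ' (W.map g hg σ) := congrFun hg2
    have key : ∀ n, IsEmb (g ∘ i n) := by
      intro n
      induction n with
      | zero => exact fun a => (hempty a).elim
      | succ n ih =>
        have k1 : ∀ x, g (i (n + 1) ((S n).jl hW x)) = ι' x := fun x =>
          (congrArg g (hι n x)).trans (g1 x)
        have k2 : ∀ σ, g (i (n + 1) ((S n).jr hW σ)) = κ' (W.map (g ∘ i n) ih.quasi σ) := fun σ =>
          (congrArg g (hκ n σ)).trans ((g2 _).trans (congrArg κ' (W.map_map _ _ _ (fun _ => rfl) σ)))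
        have main : ∀ a b : (S n).nextOrd hW, (S n).Le a b →
            g (i (n + 1) a) ≤ g (i (n + 1) b) := by
          intro a b h
          induction h with
          | inl x y h =>
            exact (k1 x).le.trans ((hm _ _ h).trans (k1 y).ge)
          | inr σ τ h =>
            refine (k2 σ).le.trans (le_trans ?_ (k2 τ).ge)
            exact (hk.kappa_kappa _ _).2 (Or.inl ((W.map_emb _ _ ih _ _).1 h))
          | sup a τ z hz h ih' =>
            have ih'' : g (i (n + 1) a) ≤ g (i n z) := by
              rw [← hnup]; exact ih'
            refine le_trans ?_ (k2 τ).ge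
            have hz' : g (i n z) ∈ W.supp (W.map (g ∘ i n) ih.quasi τ) := by
              rw [W.supp_natural]; exact ⟨z, hz, rfl⟩
            rcases (S n).j_cases hW a with ⟨x, rfl⟩ | ⟨σ, rfl⟩
            · rw [k1] at ih'' ⊢
              exact (hk.iota_kappa _ _).2 ⟨_, hz', ih''⟩
            · rw [k2] at ih'' ⊢
              exact (hk.kappa_kappa _ _).2 (Or.inr ⟨_, hz', ih''⟩)
        exact fun a b => ⟨main a b, fun h => hq _ _ _ (hg _ _ h)⟩
    intro z w
    obtain ⟨n, a, rfl⟩ := hs z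
    obtain ⟨m, b, rfl⟩ := hs w
    rw [← colim_raise hc (le_max_left n m), ← colim_raise hc (le_max_right n m) b, ← hi]
    exact key _ _ _

/-- Occurrence of generators in elements of a fixed point. -/
inductive KOcc (W : PODilator.{u}) (X L : POrd.{u}) (ι : X → L) (κ : W.obj L → L) : L → X → Prop
  | iota (x : X) : KOcc W X L ι κ (ι x) x
  | kappa (σ : W.obj L) (z : L) (x : X) : z ∈ W.supp σ → KOcc W X L ι κ z x →
      KOcc W X L ι κ (κ σ) x

section Occ

variable {W : PODilator.{u}} {X L : POrd.{u}} {ι : X → L} {κ : W.obj L → L}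

theorem KPkg.iota_ne (h : KPkg W X L ι κ) (x : X) (σ : W.obj L) : ι x ≠ κ σ := by
  intro e
  have : ι x ∈ Set.range ι ∩ Set.range κ := ⟨⟨x, rfl⟩, ⟨σ, e.symm⟩⟩
  rw [h.initl.1.range_disjoint] at this
  exact this

theorem KPkg.occ_iota (h : KPkg W X L ι κ) (x y : X) :
    KOcc W X L ι κ (ι x) y ↔ y = x := by
  constructor
  · intro h'
    generalize hz : ι x = z at h'
    cases h' with
    | iota y => exact le_antisymm (h.initl.1.iota_le _ _ hz.ge) (h.initl.1.iota_le _ _ hz.le)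
    | kappa σ z x _ _ => exact absurd hz (h.iota_ne _ _)
  · rintro rfl
    exact .iota _

theorem KPkg.occ_kappa (h : KPkg W X L ι κ) (σ : W.obj L) (y : X) :
    KOcc W X L ι κ (κ σ) y ↔ ∃ z ∈ W.supp σ, KOcc W X L ι κ z y := by
  constructor
  · intro h'
    generalize hz : κ σ = z at h'
    cases h' with
    | iota y => exact absurd hz.symm (h.iota_ne _ _)
    | kappa σ' z x h1 h2 =>
      cases h.inj hz
      exact ⟨z, h1, h2⟩
  · rintro ⟨z, h1, h2⟩
    exact .kappa _ z _ h1 h2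

theorem KPkg.occ_finite (h : KPkg W X L ι κ) : ∀ z, {x | KOcc W X L ι κ z x}.Finite := by
  refine h.ind _ ?_ ?_
  · intro x
    simp [h.occ_iota]
  · intro τ ih
    have : {x | KOcc W X L ι κ (κ τ) x} = ⋃ z ∈ W.supp τ, {x | KOcc W X L ι κ z x} := by
      ext x
      simp [h.occ_kappa]
    rw [this]
    exact (W.supp_finite τ).biUnion ih

theorem KPkg.occ_normal (hW : W.IsNormal) (h : KPkg W X L ι κ) : ∀ w z, z ≤ w →
    LeFin {x | KOcc W X L ι κ z x} {x | KOcc W X L ι κ w x} := by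
  have cs : ∀ z, (∃ x, z = ι x) ∨ ∃ σ, z = κ σ :=
    h.ind _ (fun x => Or.inl ⟨x, rfl⟩) (fun τ _ => Or.inr ⟨τ, rfl⟩)
  refine h.ind _ ?_ ?_
  · intro y z hz
    rcases cs z with ⟨x, rfl⟩ | ⟨σ, rfl⟩
    · intro x' hx'
      have := (h.occ_iota _ _).1 hx'
      subst this
      exact ⟨y, .iota _, h.initl.1.iota_le _ _ hz⟩
    · exact absurd hz (h.initl.1.kappa_iota _ _)
  · intro τ ih z hz
    have aux : ∀ w ∈ W.supp τ, z ≤ w →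
        LeFin {x | KOcc W X L ι κ z x} {x | KOcc W X L ι κ (κ τ) x} := by
      intro w hw hzw x hx
      obtain ⟨y, hy, hxy⟩ := ih w hw z hzw x hx
      exact ⟨y, .kappa _ w _ hw hy, hxy⟩
    rcases cs z with ⟨x, rfl⟩ | ⟨σ, rfl⟩
    · obtain ⟨w, hw, h'⟩ := (h.initl.1.iota_kappa _ _).1 hz
      exact aux w hw h'
    · rcases (h.initl.1.kappa_kappa _ _).1 hz with h' | ⟨w, hw, h'⟩
      · intro x hx
        obtain ⟨v, hv, hx⟩ := (h.occ_kappa _ _).1 hx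
        obtain ⟨w, hw, hvw⟩ := hW _ _ _ h' v hv
        obtain ⟨y, hy, hxy⟩ := ih w hw v hvw x hx
        exact ⟨y, .kappa _ w _ hw hy, hxy⟩
      · exact (aux w hw h')

theorem IsKruskalFP.comp {Y : POrd.{u}} (h : IsKruskalFP W X L ι κ) (f : Y → X)
    (hf : QuasiEmb f) : IsKruskalFP W Y L (ι ∘ f) κ where
  range_disjoint := by
    rw [Set.eq_empty_iff_forall_notMem]
    rintro z ⟨⟨y, rfl⟩, h2⟩
    have : ι (f y) ∈ Set.range ι ∩ Set.range κ := ⟨⟨f y, rfl⟩, h2⟩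
    rw [h.range_disjoint] at this
    exact this
  iota_le := fun x y hxy => hf _ _ (h.iota_le _ _ hxy)
  iota_kappa := fun x τ => h.iota_kappa (f x) τ
  kappa_iota := fun σ y => h.kappa_iota σ (f y)
  kappa_kappa := h.kappa_kappa

end Occ

/-- Every normal PO-dilator has a Kruskal derivative. -/
theorem exists_kruskalDeriv (W : PODilator.{u}) (hW : W.IsNormal) :
    ∃ (T : PODilator.{u}) (ι : ∀ X : POrd.{u}, X → T.obj X)
      (κ : ∀ X : POrd.{u}, W.obj (T.obj X) → T.obj X),
      IsKruskalDeriv W T ι κ := by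

  choose L ι κ pk using exists_pkg W hW
  have ex : ∀ {X Y : POrd.{u}} (f : X → Y), QuasiEmb f → ∃ g : L X → L Y, ∃ hg : QuasiEmb g,
      g ∘ ι X = ι Y ∘ f ∧ g ∘ κ X = κ Y ∘ W.map g hg := fun {X Y} f hf =>
    ((pk X).initl.2 (L Y) (ι Y ∘ f) (κ Y) ((pk Y).initl.1.comp f hf)).exists
  have un : ∀ {X Y : POrd.{u}} (f : X → Y), QuasiEmb f → ∀ g g' : L X → L Y,
      (∃ hg : QuasiEmb g, g ∘ ι X = ι Y ∘ f ∧ g ∘ κ X = κ Y ∘ W.map g hg) →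
      (∃ hg : QuasiEmb g', g' ∘ ι X = ι Y ∘ f ∧ g' ∘ κ X = κ Y ∘ W.map g' hg) → g = g' :=
    fun {X Y} f hf g g' h h' =>
    ((pk X).initl.2 (L Y) (ι Y ∘ f) (κ Y) ((pk Y).initl.1.comp f hf)).unique h h'
  choose M hM hM1 hM2 using @ex
  have m1 : ∀ {X Y : POrd.{u}} (f : X → Y) (hf : QuasiEmb f) (x : X),
      M f hf (ι X x) = ι Y (f x) := fun {X Y} f hf x => congrFun (hM1 f hf) x
  have m2 : ∀ {X Y : POrd.{u}} (f : X → Y) (hf : QuasiEmb f) (σ : W.obj (L X)),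
      M f hf (κ X σ) = κ Y (W.map (M f hf) (hM f hf) σ) :=
    fun {X Y} f hf σ => congrFun (hM2 f hf) σ
  have memb : ∀ {X Y : POrd.{u}} (f : X → Y) (hf : QuasiEmb f), IsEmb f → IsEmb (M f hf) := by
    intro X Y f hf he
    exact (pk X).emb (L Y) (ι Y ∘ f) (κ Y) ((pk Y).initl.1.comp f hf)
      (fun x y h => (pk Y).mono _ _ ((he _ _).1 h)) _ (hM f hf) (hM1 f hf) (hM2 f hf)
  let T : PODilator.{u} :=
    { obj := L
      map := fun {X Y} f hf => M f hf
      supp := fun {X} z => {x | KOcc W X (L X) (ι X) (κ X) z x}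
      map_quasiEmb := fun {X Y} f hf => hM f hf
      map_id := by
        intro X
        refine un id quasiEmb_id _ _ ⟨hM _ _, hM1 _ _, hM2 _ _⟩ ⟨quasiEmb_id, rfl, ?_⟩
        rw [W.map_id]; rfl
      map_comp := by
        intro X Y Z f g hf hg
        refine un (g ∘ f) (hf.comp hg) _ _ ⟨hM _ _, hM1 _ _, hM2 _ _⟩
          ⟨(hM f hf).comp (hM g hg), ?_, ?_⟩
        · funext x
          show M g hg (M f hf (ι X x)) = ι Z (g (f x))
          rw [m1, m1]
        · funext σ
          rw [W.map_comp (M f hf) (M g hg) (hM f hf) (hM g hg)]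
          show M g hg (M f hf (κ X σ)) = κ Z (W.map _ _ (W.map _ _ σ))
          rw [m2, m2]
      map_emb := memb
      supp_finite := fun {X} z => (pk X).occ_finite z
      supp_natural := by
        intro X Y f hf
        refine (pk X).ind _ ?_ ?_
        · intro x
          ext y
          simp [m1, (pk X).occ_iota, (pk Y).occ_iota, eq_comm]
        · intro τ ih
          ext y
          simp only [m2, Set.mem_ofPred_eq, (pk Y).occ_kappa, W.supp_natural,
            Set.mem_image, (pk X).occ_kappa]
          constructor
          · rintro ⟨_, ⟨z, hz, rfl⟩, h⟩
            have h' : y ∈ {x | KOcc W Y (L Y) (ι Y) (κ Y) (M f hf z) x} := h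
            rw [ih z hz] at h'
            obtain ⟨x, hx, rfl⟩ := h'
            exact ⟨x, ⟨z, hz, hx⟩, rfl⟩
          · rintro ⟨x, ⟨z, hz, hx⟩, rfl⟩
            refine ⟨_, ⟨z, hz, rfl⟩, ?_⟩
            have h' : f x ∈ f '' {x | KOcc W X (L X) (ι X) (κ X) z x} := ⟨x, hx, rfl⟩
            rw [← ih z hz] at h'
            exact h'
      supp_cond := by
        intro X Y f hf he
        refine (pk Y).ind _ ?_ ?_
        · intro y h
          obtain ⟨x, rfl⟩ := h (KOcc.iota y)
          exact ⟨ι X x, m1 f hf x⟩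
        · intro τ ih h
          obtain ⟨σ, rfl⟩ := W.supp_cond (M f hf) (hM f hf) (memb f hf he) τ (fun z hz =>
            ih z hz fun x hx => h (KOcc.kappa τ z x hz hx))
          exact ⟨κ X σ, m2 f hf σ⟩ }
  exact ⟨T, ι, κ,
    { normal := fun X σ τ h => (pk X).occ_normal hW τ σ h
      initial := fun X => (pk X).initl
      nat_iota := fun X Y f hf => (hM1 f hf).symm
      nat_kappa := fun X Y f hf => hM2 f hf }⟩
end

section
/- If W is a normal WPO-dilator and (TW, ι, κ) is a Kruskal derivative of W, then TW is a normal WPO-dilator, i.e., TW(X) is a well partial order for every well partial order X. -/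
universe u

namespace KD

/-- Generation principle for a fixed point. -/
def Gen (W : PODilator.{u}) {X Z : POrd.{u}} (ι : X → Z) (κ : W.obj Z → Z) : Prop :=
  ∀ P : Z → Prop, (∀ x, P (ι x)) → (∀ s, (∀ z ∈ W.supp s, P z) → P (κ s)) → ∀ z, P z

theorem QE_inj {X Y : Type*} [PartialOrder X] [PartialOrder Y] {f : X → Y} (hf : QuasiEmb f)
    {a b : X} (h : f a = f b) : a = b :=
  le_antisymm (hf _ _ h.le) (hf _ _ h.ge)

/-- A relation on `Z` that is a partial order on its reflexive part, extending the order of `Z`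
there. -/
structure Pre {Z : POrd.{u}} (R : Z → Z → Prop) : Prop where
  trans : ∀ {a b c}, R a b → R b c → R a c
  antisymm : ∀ {a b}, R a b → R b a → a = b
  left : ∀ {a b}, R a b → R a a
  right : ∀ {a b}, R a b → R b b
  quasi : ∀ {a b}, R a a → R b b → a ≤ b → R a b

def Car {Z : POrd.{u}} (R : Z → Z → Prop) (h : Pre R) : POrd.{u} where
  carrier := {z : Z // R z z}
  str :=
    { le := fun a b => R a.1 b.1
      lt := fun a b => R a.1 b.1 ∧ ¬ R b.1 a.1
      lt_iff_le_not_ge := fun _ _ => Iff.rfl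
      le_refl := fun a => a.2
      le_trans := fun _ _ _ h1 h2 => h.trans h1 h2
      le_antisymm := fun _ _ h1 h2 => Subtype.ext (h.antisymm h1 h2) }

def val {Z : POrd.{u}} {R : Z → Z → Prop} (h : Pre R) : Car R h → Z := fun a => a.1

theorem val_quasi {Z : POrd.{u}} {R : Z → Z → Prop} (h : Pre R) : QuasiEmb (val h) :=
  fun a b hab => h.quasi a.2 b.2 hab

def Ext {Z : POrd.{u}} (R R' : Z → Z → Prop) : Prop :=
  (∀ a b, R a b → R' a b) ∧ ∀ a b, R a a → R b b → R' a b → R a b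

def WR (W : PODilator.{u}) {Z : POrd.{u}} (R : Z → Z → Prop) (s t : W.obj Z) : Prop :=
  ∃ (h : Pre R) (σ τ : W.obj (Car R h)),
    W.map (val h) (val_quasi h) σ = s ∧ W.map (val h) (val_quasi h) τ = t ∧ σ ≤ τ

section WRlem
variable {W : PODilator.{u}} {Z : POrd.{u}} {R R' : Z → Z → Prop} {s t r : W.obj Z}

theorem WR.left (h : WR W R s t) : WR W R s s := by
  obtain ⟨h, σ, τ, h1, h2, h3⟩ := h
  exact ⟨h, σ, σ, h1, h1, le_rfl⟩

theorem WR.right (h : WR W R s t) : WR W R t t := by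
  obtain ⟨h, σ, τ, h1, h2, h3⟩ := h
  exact ⟨h, τ, τ, h2, h2, le_rfl⟩

theorem WR.trans (h : WR W R s t) (h' : WR W R t r) : WR W R s r := by
  obtain ⟨h, σ, τ, h1, h2, h3⟩ := h
  obtain ⟨_, τ', ρ, h1', h2', h3'⟩ := h'
  have : τ = τ' := QE_inj (W.map_quasiEmb _ (val_quasi h)) (h2.trans h1'.symm)
  subst this
  exact ⟨h, σ, ρ, h1, h2', h3.trans h3'⟩

theorem WR.antisymm (h : WR W R s t) (h' : WR W R t s) : s = t := by
  obtain ⟨h, σ, τ, h1, h2, h3⟩ := h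
  obtain ⟨_, τ', ρ, h1', h2', h3'⟩ := h'
  have e1 : τ = τ' := QE_inj (W.map_quasiEmb _ (val_quasi h)) (h2.trans h1'.symm)
  have e2 : σ = ρ := QE_inj (W.map_quasiEmb _ (val_quasi h)) (h1.trans h2'.symm)
  subst e1 e2
  rw [← h1, ← h2, le_antisymm h3 h3']

theorem WR.supp_mem (h : WR W R s t) {z : Z} (hz : z ∈ W.supp s) : R z z := by
  obtain ⟨h, σ, τ, h1, h2, h3⟩ := h
  rw [← h1, W.supp_natural] at hz
  obtain ⟨y, -, rfl⟩ := hz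
  exact y.2

theorem WR.normal (hW : W.IsNormal) (h : WR W R s t) {z : Z} (hz : z ∈ W.supp s) :
    ∃ y ∈ W.supp t, R z y := by
  obtain ⟨h, σ, τ, h1, h2, h3⟩ := h
  rw [← h1, W.supp_natural] at hz
  obtain ⟨y, hy, rfl⟩ := hz
  obtain ⟨y', hy', hle⟩ := hW _ _ _ h3 y hy
  refine ⟨val h y', ?_, hle⟩
  rw [← h2, W.supp_natural]
  exact ⟨y', hy', rfl⟩

theorem WR.quasi (h : WR W R s s) (h' : WR W R t t) (hst : s ≤ t) : WR W R s t := by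
  obtain ⟨h, σ, -, h1, -, -⟩ := h
  obtain ⟨_, τ, -, h1', -, -⟩ := h'
  refine ⟨h, σ, τ, h1, h1', W.map_quasiEmb _ (val_quasi h) _ _ ?_⟩
  rw [h1, h1']; exact hst

def emb (hE : Ext R R') (h : Pre R) (h' : Pre R') : Car R h → Car R' h' :=
  fun a => ⟨a.1, hE.1 _ _ a.2⟩

theorem emb_emb (hE : Ext R R') (h : Pre R) (h' : Pre R') : IsEmb (emb hE h h') :=
  fun a b => ⟨fun hab => hE.1 _ _ hab, fun hab => hE.2 _ _ a.2 b.2 hab⟩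

theorem emb_quasi (hE : Ext R R') (h : Pre R) (h' : Pre R') : QuasiEmb (emb hE h h') :=
  fun a b hab => ((emb_emb hE h h') a b).2 hab

theorem map_emb_val (hE : Ext R R') (h : Pre R) (h' : Pre R') (σ : W.obj (Car R h)) :
    W.map (val h') (val_quasi h') (W.map (emb hE h h') (emb_quasi hE h h') σ)
      = W.map (val h) (val_quasi h) σ :=
  (congrFun (W.map_comp (emb hE h h') (val h') (emb_quasi hE h h') (val_quasi h')) σ).symm

theorem WR.ext (hE : Ext R R') (h' : Pre R') (h : WR W R s t) : WR W R' s t := by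
  obtain ⟨h, σ, τ, h1, h2, h3⟩ := h
  refine ⟨h', W.map (emb hE h h') (emb_quasi hE h h') σ,
    W.map (emb hE h h') (emb_quasi hE h h') τ, ?_, ?_, ?_⟩
  · rw [map_emb_val, h1]
  · rw [map_emb_val, h2]
  · exact (W.map_emb _ _ (emb_emb hE h h') _ _).1 h3

theorem WR.restrict (hE : Ext R R') (hp : Pre R) (h : WR W R' s t)
    (hs : ∀ z ∈ W.supp s, R z z) (ht : ∀ z ∈ W.supp t, R z z) : WR W R s t := by
  obtain ⟨h', σ, τ, rfl, rfl, h3⟩ := h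
  have key : ∀ σ : W.obj (Car R' h'),
      (∀ z ∈ W.supp (W.map (val h') (val_quasi h') σ), R z z) →
      ∃ ρ, W.map (emb hE hp h') (emb_quasi hE hp h') ρ = σ := by
    intro σ hs
    refine W.supp_cond _ (emb_quasi hE hp h') (emb_emb hE hp h') σ ?_
    intro y hy
    exact ⟨⟨y.1, hs _ (by rw [W.supp_natural]; exact ⟨y, hy, rfl⟩)⟩, rfl⟩
  obtain ⟨σ, rfl⟩ := key σ hs
  obtain ⟨τ, rfl⟩ := key τ ht
  exact ⟨hp, σ, τ, (map_emb_val ..).symm, (map_emb_val ..).symm,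
    (W.map_emb _ _ (emb_emb hE hp h') _ _).2 h3⟩
end WRlem

section FP
variable {W : PODilator.{u}} {X Z : POrd.{u}} {ι : X → Z} {κ : W.obj Z → Z}

theorem ne_ik (hK : IsKruskalFP W X Z ι κ) (x : X) (s : W.obj Z) : κ s ≠ ι x :=
  fun h => hK.kappa_iota s x h.le

theorem supp_le (hK : IsKruskalFP W X Z ι κ) (hG : Gen W ι κ) {z : Z} {s : W.obj Z}
    (hz : z ∈ W.supp s) : z ≤ κ s := by
  have : (∃ x, z = ι x) ∨ ∃ s, z = κ s :=
    hG (fun z => (∃ x, z = ι x) ∨ ∃ s, z = κ s) (fun x => .inl ⟨x, rfl⟩)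
      (fun s _ => .inr ⟨s, rfl⟩) z
  rcases this with ⟨x, rfl⟩ | ⟨t, rfl⟩
  · exact (hK.iota_kappa _ _).2 ⟨_, hz, le_rfl⟩
  · exact (hK.kappa_kappa _ _).2 (.inr ⟨_, hz, le_rfl⟩)

theorem not_le_supp (hW : W.IsNormal) (hK : IsKruskalFP W X Z ι κ) (hG : Gen W ι κ) :
    ∀ (z : Z) (s : W.obj Z), z ∈ W.supp s → ¬ κ s ≤ z := by
  refine hG _ (fun x s _ => hK.kappa_iota s x) ?_
  intro r ih t ht hle
  rcases (hK.kappa_kappa _ _).1 hle with h | ⟨w, hw, h⟩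
  · obtain ⟨w, hw, h'⟩ := hW _ _ _ h _ ht
    exact ih w hw r hw h'
  · exact ih w hw r hw ((supp_le hK hG ht).trans h)

theorem kinj (hW : W.IsNormal) (hK : IsKruskalFP W X Z ι κ) (hG : Gen W ι κ)
    {s t : W.obj Z} (h : κ s = κ t) : s = t := by
  have key : ∀ s t, κ s = κ t → s ≤ t := by
    intro s t h
    rcases (hK.kappa_kappa _ _).1 h.le with h' | ⟨w, hw, h'⟩
    · exact h'
    · exact absurd (h ▸ h') (not_le_supp hW hK hG w t hw)
  exact le_antisymm (key _ _ h) (key _ _ h.symm)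

variable (W ι κ) in
structure Good (R : Z → Z → Prop) : Prop where
  pre : Pre R
  iota : ∀ x y, R (ι x) (ι y) ↔ x ≤ y
  range : ∀ a, R a a → (∃ x, a = ι x) ∨ ∃ s, WR W R s s ∧ a = κ s
  kap : ∀ a t, R (κ t) (κ t) →
    (R a (κ t) ↔ (∃ z ∈ W.supp t, R a z) ∨ ∃ s, a = κ s ∧ R a a ∧ WR W R s t)
  kapi : ∀ s y, ¬ R (κ s) (ι y)
  nle : ∀ t z, z ∈ W.supp t → ¬ R (κ t) z

theorem Good.dom (hW : W.IsNormal) (hK : IsKruskalFP W X Z ι κ) (hG : Gen W ι κ)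
    {R : Z → Z → Prop} (g : Good W ι κ R) {s : W.obj Z} (h : R (κ s) (κ s)) : WR W R s s := by
  rcases g.range _ h with ⟨x, hx⟩ | ⟨t, ht, e⟩
  · exact absurd hx (ne_ik hK x s)
  · rw [kinj hW hK hG e]; exact ht

theorem good_base (hK : IsKruskalFP W X Z ι κ) :
    Good W ι κ (fun a b => ∃ x y, a = ι x ∧ b = ι y ∧ x ≤ y) := by
  have inj : ∀ {x y}, ι x = ι y → x = y := fun h =>
    le_antisymm (hK.iota_le _ _ h.le) (hK.iota_le _ _ h.ge)
  refine ⟨⟨?_, ?_, ?_, ?_, ?_⟩, ?_, ?_, ?_, ?_, ?_⟩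
  · rintro a b c ⟨x, y, rfl, rfl, h⟩ ⟨x', y', e, rfl, h'⟩
    exact ⟨x, y', rfl, rfl, h.trans ((inj e).le.trans h')⟩
  · rintro a b ⟨x, y, rfl, rfl, h⟩ ⟨x', y', e, e', h'⟩
    obtain rfl := inj e
    obtain rfl := inj e'
    rw [le_antisymm h h']
  · rintro a b ⟨x, y, rfl, rfl, h⟩
    exact ⟨x, x, rfl, rfl, le_rfl⟩
  · rintro a b ⟨x, y, rfl, rfl, h⟩
    exact ⟨y, y, rfl, rfl, le_rfl⟩
  · rintro a b ⟨x, -, rfl, -, -⟩ ⟨y, -, rfl, -, -⟩ h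
    exact ⟨x, y, rfl, rfl, hK.iota_le _ _ h⟩
  · intro x y
    constructor
    · rintro ⟨x', y', e, e', h⟩
      rw [inj e, inj e']; exact h
    · intro h; exact ⟨x, y, rfl, rfl, h⟩
  · rintro a ⟨x, -, rfl, -, -⟩
    exact .inl ⟨x, rfl⟩
  · rintro a t ⟨x, -, e, -, -⟩
    exact absurd e (ne_ik hK _ _)
  · rintro s y ⟨x, -, e, -, -⟩
    exact absurd e (ne_ik hK _ _)
  · rintro s y - ⟨x, -, e, -, -⟩
    exact absurd e (ne_ik hK _ _)

theorem good_step (hW : W.IsNormal) (hK : IsKruskalFP W X Z ι κ) (hG : Gen W ι κ)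
    {R : Z → Z → Prop} (g : Good W ι κ R) {s₀ : W.obj Z} (hs₀ : WR W R s₀ s₀)
    (hn : ¬ R (κ s₀) (κ s₀)) : ∃ R', Good W ι κ R' ∧ Ext R R' ∧ R' (κ s₀) (κ s₀) := by
  have inj : ∀ {s t}, κ s = κ t → s = t := fun h => kinj hW hK hG h
  have dom : ∀ {s}, R (κ s) (κ s) → WR W R s s := fun h => g.dom hW hK hG h
  have p := g.pre
  let Dn : Z → Prop := fun a => (∃ z ∈ W.supp s₀, R a z) ∨ ∃ s, a = κ s ∧ R a a ∧ WR W R s s₀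
  let Up : Z → Prop := fun b => ∃ t, WR W R s₀ t ∧ R (κ t) b
  have DnR : ∀ a, Dn a → R a a := by
    rintro a (⟨z, -, h⟩ | ⟨s, -, h, -⟩)
    · exact p.left h
    · exact h
  have UpR : ∀ a, Up a → R a a := by
    rintro a ⟨t, -, h⟩; exact p.right h
  have DnC : ∀ a b, R a b → Dn b → Dn a := by
    rintro a b hab (⟨z, hz, h⟩ | ⟨s, rfl, h, hs⟩)
    · exact .inl ⟨z, hz, p.trans hab h⟩
    · rcases (g.kap _ _ h).1 hab with ⟨z, hz, h1⟩ | ⟨s', rfl, h1, h2⟩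
      · obtain ⟨z', hz', h3⟩ := hs.normal hW hz
        exact .inl ⟨z', hz', p.trans h1 h3⟩
      · exact .inr ⟨s', rfl, h1, h2.trans hs⟩
  have UpC : ∀ a b, R a b → Up a → Up b := by
    rintro a b hab ⟨t, h, h'⟩
    exact ⟨t, h, p.trans h' hab⟩
  have Dnt : ∀ a t, Dn a → WR W R s₀ t → R (κ t) (κ t) → R a (κ t) := by
    rintro a t (⟨z, hz, h⟩ | ⟨s, rfl, h, hs⟩) ht htt
    · obtain ⟨z', hz', h3⟩ := ht.normal hW hz
      exact (g.kap _ _ htt).2 (.inl ⟨z', hz', p.trans h h3⟩)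
    · exact (g.kap _ _ htt).2 (.inr ⟨s, rfl, h, hs.trans ht⟩)
  have DU : ∀ a b, Dn a → Up b → R a b := by
    rintro a b ha ⟨t, h, h'⟩
    exact p.trans (Dnt a t ha h (p.left h')) h'
  have nDU : ∀ b, Dn b → Up b → False := by
    rintro b hb ⟨t, h, h'⟩
    have e := p.antisymm h' (Dnt b t hb h (p.left h'))
    subst e
    rcases hb with ⟨z, hz, h1⟩ | ⟨s, e, h1, hs⟩
    · obtain ⟨z', hz', h3⟩ := h.normal hW hz
      exact g.nle t z' hz' (p.trans h1 h3)
    · obtain rfl := inj e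
      obtain rfl := hs.antisymm h
      exact hn h1
  let R' : Z → Z → Prop := fun a b =>
    R a b ∨ (a = κ s₀ ∧ b = κ s₀) ∨ (b = κ s₀ ∧ Dn a) ∨ (a = κ s₀ ∧ Up b)
  have nc1 : ∀ {a}, ¬ R (κ s₀) a := fun h => hn (p.left h)
  have nc2 : ∀ {a}, ¬ R a (κ s₀) := fun h => hn (p.right h)
  have nD : ¬ Dn (κ s₀) := fun h => hn (DnR _ h)
  have nU : ¬ Up (κ s₀) := fun h => hn (UpR _ h)
  have Rcc : R' (κ s₀) (κ s₀) := .inr (.inl ⟨rfl, rfl⟩)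
  have Rself : ∀ {a}, R' a a → R a a ∨ a = κ s₀ := by
    rintro a (h | ⟨h, -⟩ | ⟨h, -⟩ | ⟨h, -⟩) <;> simp [h]
  have RcUp : ∀ {b}, R b b → (R' (κ s₀) b ↔ Up b) := by
    intro b hb
    constructor
    · rintro (h | ⟨-, rfl⟩ | ⟨rfl, h⟩ | ⟨-, h⟩)
      · exact absurd h nc1
      · exact absurd hb hn
      · exact absurd hb hn
      · exact h
    · intro h; exact .inr (.inr (.inr ⟨rfl, h⟩))
  have RcDn : ∀ {b}, R b b → (R' b (κ s₀) ↔ Dn b) := by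
    intro b hb
    constructor
    · rintro (h | ⟨rfl, -⟩ | ⟨-, h⟩ | ⟨rfl, h⟩)
      · exact absurd h nc2
      · exact absurd hb hn
      · exact h
      · exact absurd hb hn
    · intro h; exact .inr (.inr (.inl ⟨rfl, h⟩))
  have ext : Ext R R' := by
    refine ⟨fun a b h => .inl h, ?_⟩
    rintro a b ha hb (h | ⟨rfl, -⟩ | ⟨rfl, h⟩ | ⟨rfl, h⟩)
    · exact h
    · exact absurd ha hn
    · exact absurd hb hn
    · exact absurd ha hn
  have upq : ∀ q, R q q → κ s₀ ≤ q → Up q := by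
    refine hG _ (fun x _ h => absurd h (hK.kappa_iota _ _)) ?_
    intro s ih hs hle
    rcases (hK.kappa_kappa _ _).1 hle with h | ⟨z, hz, h⟩
    · exact ⟨s, hs₀.quasi (dom hs) h, hs⟩
    · have hzz := (dom hs).supp_mem hz
      exact UpC z _ ((g.kap _ _ hs).2 (.inl ⟨z, hz, hzz⟩)) (ih z hz hzz h)
  have dnq : ∀ q, R q q → q ≤ κ s₀ → Dn q := by
    intro q hq hle
    rcases g.range q hq with ⟨x, rfl⟩ | ⟨s, hs, rfl⟩
    · obtain ⟨z, hz, h⟩ := (hK.iota_kappa _ _).1 hle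
      exact .inl ⟨z, hz, p.quasi hq (hs₀.supp_mem hz) h⟩
    · rcases (hK.kappa_kappa _ _).1 hle with h | ⟨z, hz, h⟩
      · exact .inr ⟨s, rfl, hq, hs.quasi hs₀ h⟩
      · exact .inl ⟨z, hz, p.quasi hq (hs₀.supp_mem hz) h⟩
  have pre' : Pre R' := by
    refine ⟨?_, ?_, ?_, ?_, ?_⟩
    · rintro a b c (h | ⟨rfl, rfl⟩ | ⟨rfl, h⟩ | ⟨rfl, h⟩) (h' | ⟨e, rfl⟩ | ⟨rfl, h'⟩ | ⟨e, h'⟩)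
      · exact .inl (p.trans h h')
      · subst e; exact absurd h nc2
      · exact .inr (.inr (.inl ⟨rfl, DnC _ _ h h'⟩))
      · subst e; exact absurd h nc2
      · exact absurd h' nc1
      · exact Rcc
      · exact absurd h' nD
      · exact .inr (.inr (.inr ⟨rfl, h'⟩))
      · exact absurd h' nc1
      · exact .inr (.inr (.inl ⟨rfl, h⟩))
      · exact absurd h' nD
      · exact .inl (DU _ _ h h')
      · exact .inr (.inr (.inr ⟨rfl, UpC _ _ h' h⟩))
      · exact Rcc
      · exact Rcc
      · subst e; exact absurd h nU
    · rintro a b (h | ⟨rfl, rfl⟩ | ⟨rfl, h⟩ | ⟨rfl, h⟩) h'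
      · exact p.antisymm h (ext.2 _ _ (p.right h) (p.left h) h')
      · rfl
      · exact (nDU a h ((RcUp (DnR _ h)).1 h')).elim
      · exact (nDU b ((RcDn (UpR _ h)).1 h') h).elim
    · rintro a b (h | ⟨rfl, rfl⟩ | ⟨rfl, h⟩ | ⟨rfl, h⟩)
      · exact .inl (p.left h)
      · exact Rcc
      · exact .inl (DnR _ h)
      · exact Rcc
    · rintro a b (h | ⟨rfl, rfl⟩ | ⟨rfl, h⟩ | ⟨rfl, h⟩)
      · exact .inl (p.right h)
      · exact Rcc
      · exact Rcc
      · exact .inl (UpR _ h)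
    · intro a b ha hb hab
      rcases Rself ha with ha | rfl
      · rcases Rself hb with hb | rfl
        · exact .inl (p.quasi ha hb hab)
        · exact (RcDn ha).2 (dnq _ ha hab)
      · rcases Rself hb with hb | rfl
        · exact (RcUp hb).2 (upq _ hb hab)
        · exact Rcc
  have dom' : ∀ {s}, R' (κ s) (κ s) → WR W R s s := by
    intro s h
    rcases Rself h with h | h
    · exact dom h
    · rw [inj h]; exact hs₀
  have wr : ∀ {s t}, R' (κ s) (κ s) → R' (κ t) (κ t) → (WR W R' s t ↔ WR W R s t) := by
    intro s t hs ht
    exact ⟨fun h => h.restrict ext p (fun z hz => (dom' hs).supp_mem hz)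
      (fun z hz => (dom' ht).supp_mem hz), fun h => h.ext ext pre'⟩
  refine ⟨R', ⟨pre', ?_, ?_, ?_, ?_, ?_⟩, ext, Rcc⟩
  · intro x y
    rw [← g.iota]
    exact ⟨fun h => ext.2 _ _ ((g.iota _ _).2 le_rfl) ((g.iota _ _).2 le_rfl) h, .inl⟩
  · intro a ha
    rcases Rself ha with h | rfl
    · rcases g.range a h with h | ⟨s, hs, rfl⟩
      · exact .inl h
      · exact .inr ⟨s, hs.ext ext pre', rfl⟩
    · exact .inr ⟨s₀, hs₀.ext ext pre', rfl⟩
  · intro a t ht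
    have e2 : (∃ s, a = κ s ∧ R' a a ∧ WR W R' s t) ↔ (∃ s, a = κ s ∧ R' a a ∧ WR W R s t) := by
      constructor
      · rintro ⟨s, rfl, h, h'⟩; exact ⟨s, rfl, h, (wr h ht).1 h'⟩
      · rintro ⟨s, rfl, h, h'⟩; exact ⟨s, rfl, h, (wr h ht).2 h'⟩
    rw [e2]
    by_cases haa : R' a a
    swap
    · constructor
      · intro h; exact absurd (pre'.left h) haa
      · rintro (⟨z, -, h⟩ | ⟨s, -, h, -⟩)
        · exact absurd (pre'.left h) haa
        · exact absurd h haa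
    have sm : ∀ {z}, z ∈ W.supp t → R z z := fun hz => (dom' ht).supp_mem hz
    rcases Rself haa with ha | rfl
    · have e3 : (∃ z ∈ W.supp t, R' a z) ↔ (∃ z ∈ W.supp t, R a z) :=
        ⟨fun ⟨z, hz, h⟩ => ⟨z, hz, ext.2 _ _ ha (sm hz) h⟩, fun ⟨z, hz, h⟩ => ⟨z, hz, .inl h⟩⟩
      have e4 : R' a a ↔ R a a := by simp [haa, ha]
      rw [e3, e4]
      rcases Rself ht with ht' | e
      · rw [← g.kap a t ht']
        exact ⟨fun h => ext.2 _ _ ha ht' h, .inl⟩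
      · obtain rfl := inj e
        exact RcDn ha
    · rcases Rself ht with ht' | e
      · rw [RcUp ht']
        constructor
        · rintro ⟨r, h1, h2⟩
          rcases (g.kap _ _ ht').1 h2 with ⟨z, hz, h3⟩ | ⟨s, e, h3, h4⟩
          · exact .inl ⟨z, hz, (RcUp (sm hz)).2 ⟨r, h1, h3⟩⟩
          · obtain rfl := inj e
            exact .inr ⟨s₀, rfl, Rcc, h1.trans h4⟩
        · rintro (⟨z, hz, h⟩ | ⟨s, e, -, h⟩)
          · exact UpC z _ ((g.kap _ _ ht').2 (.inl ⟨z, hz, sm hz⟩)) ((RcUp (sm hz)).1 h)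
          · obtain rfl := inj e
            exact ⟨t, h, ht'⟩
      · obtain rfl := inj e
        exact ⟨fun _ => .inr ⟨_, rfl, Rcc, hs₀⟩, fun _ => Rcc⟩
  · intro s y h
    have hy : R (ι y) (ι y) := (g.iota _ _).2 le_rfl
    rcases Rself (pre'.left h) with hs | e
    · exact g.kapi _ _ (ext.2 _ _ hs hy h)
    · rw [e] at h
      obtain ⟨t, -, h⟩ := (RcUp hy).1 h
      exact g.kapi _ _ h
  · intro t z hz h
    have hzz := (dom' (pre'.left h)).supp_mem hz
    rcases Rself (pre'.left h) with ht | e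
    · exact g.nle _ _ hz (ext.2 _ _ ht hzz h)
    · obtain rfl := inj e
      obtain ⟨r, h1, h2⟩ := (RcUp hzz).1 h
      obtain ⟨z', hz', h3⟩ := h1.normal hW hz
      exact g.nle _ _ hz' (p.trans h2 h3)

theorem Ext.refl (R : Z → Z → Prop) : Ext R R := ⟨fun _ _ h => h, fun _ _ _ _ h => h⟩

theorem Ext.trans {R R' R'' : Z → Z → Prop} (h : Ext R R') (h' : Ext R' R'') : Ext R R'' :=
  ⟨fun _ _ a => h'.1 _ _ (h.1 _ _ a),
   fun _ _ a b c => h.2 _ _ a b (h'.2 _ _ (h.1 _ _ a) (h.1 _ _ b) c)⟩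

theorem good_chain (hW : W.IsNormal) (hK : IsKruskalFP W X Z ι κ) (hG : Gen W ι κ)
    (C : Set (Z → Z → Prop)) (hC : ∀ R ∈ C, Good W ι κ R)
    (hch : ∀ R ∈ C, ∀ R' ∈ C, Ext R R' ∨ Ext R' R) (hne : C.Nonempty) :
    ∃ U, Good W ι κ U ∧ ∀ R ∈ C, Ext R U := by
  have inj : ∀ {s t}, κ s = κ t → s = t := fun h => kinj hW hK hG h
  let U : Z → Z → Prop := fun a b => ∃ R ∈ C, R a b
  have ext : ∀ R ∈ C, Ext R U := by
    intro R hR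
    refine ⟨fun a b h => ⟨R, hR, h⟩, ?_⟩
    rintro a b ha hb ⟨R', hR', h⟩
    rcases hch R hR R' hR' with e | e
    · exact e.2 _ _ ha hb h
    · exact e.1 _ _ h
  have two : ∀ R ∈ C, ∀ R' ∈ C, ∃ Q ∈ C, Ext R Q ∧ Ext R' Q := by
    intro R hR R' hR'
    rcases hch R hR R' hR' with e | e
    · exact ⟨R', hR', e, Ext.refl _⟩
    · exact ⟨R, hR, Ext.refl _, e⟩
  have pre' : Pre U := by
    refine ⟨?_, ?_, ?_, ?_, ?_⟩
    · rintro a b c ⟨R, hR, h⟩ ⟨R', hR', h'⟩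
      obtain ⟨Q, hQ, e, e'⟩ := two R hR R' hR'
      exact ⟨Q, hQ, (hC Q hQ).pre.trans (e.1 _ _ h) (e'.1 _ _ h')⟩
    · rintro a b ⟨R, hR, h⟩ ⟨R', hR', h'⟩
      obtain ⟨Q, hQ, e, e'⟩ := two R hR R' hR'
      exact (hC Q hQ).pre.antisymm (e.1 _ _ h) (e'.1 _ _ h')
    · rintro a b ⟨R, hR, h⟩
      exact ⟨R, hR, (hC R hR).pre.left h⟩
    · rintro a b ⟨R, hR, h⟩
      exact ⟨R, hR, (hC R hR).pre.right h⟩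
    · rintro a b ⟨R, hR, h⟩ ⟨R', hR', h'⟩ hab
      obtain ⟨Q, hQ, e, e'⟩ := two R hR R' hR'
      exact ⟨Q, hQ, (hC Q hQ).pre.quasi (e.1 _ _ h) (e'.1 _ _ h') hab⟩
  have dom : ∀ R ∈ C, ∀ s, R (κ s) (κ s) → WR W R s s :=
    fun R hR s h => (hC R hR).dom hW hK hG h
  refine ⟨U, ⟨pre', ?_, ?_, ?_, ?_, ?_⟩, ext⟩
  · intro x y
    constructor
    · rintro ⟨R, hR, h⟩; exact ((hC R hR).iota _ _).1 h
    · intro h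
      obtain ⟨R, hR⟩ := hne
      exact ⟨R, hR, ((hC R hR).iota _ _).2 h⟩
  · rintro a ⟨R, hR, h⟩
    rcases (hC R hR).range a h with h | ⟨s, hs, rfl⟩
    · exact .inl h
    · exact .inr ⟨s, hs.ext (ext R hR) pre', rfl⟩
  · rintro a t ⟨R, hR, ht⟩
    constructor
    · rintro ⟨R', hR', h⟩
      rcases ((hC R' hR').kap _ _ ((hC R' hR').pre.right h)).1 h with ⟨z, hz, h⟩ | ⟨s, e, h, h'⟩
      · exact .inl ⟨z, hz, R', hR', h⟩
      · exact .inr ⟨s, e, ⟨R', hR', h⟩, h'.ext (ext R' hR') pre'⟩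
    · rintro (⟨z, hz, R', hR', h⟩ | ⟨s, rfl, ⟨R', hR', h⟩, h'⟩)
      · obtain ⟨Q, hQ, e, e'⟩ := two R hR R' hR'
        exact ⟨Q, hQ, ((hC Q hQ).kap _ _ (e.1 _ _ ht)).2 (.inl ⟨z, hz, e'.1 _ _ h⟩)⟩
      · obtain ⟨Q, hQ, e, e'⟩ := two R hR R' hR'
        refine ⟨Q, hQ, ((hC Q hQ).kap _ _ (e.1 _ _ ht)).2 (.inr ⟨s, rfl, e'.1 _ _ h, ?_⟩)⟩
        exact h'.restrict (ext Q hQ) (hC Q hQ).pre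
          (fun z hz => (dom Q hQ s (e'.1 _ _ h)).supp_mem hz)
          (fun z hz => (dom Q hQ t (e.1 _ _ ht)).supp_mem hz)
  · rintro s y ⟨R, hR, h⟩
    exact (hC R hR).kapi _ _ h
  · rintro t z hz ⟨R, hR, h⟩
    exact (hC R hR).nle _ _ hz h

theorem good_max (hW : W.IsNormal) (hK : IsKruskalFP W X Z ι κ) (hG : Gen W ι κ) :
    ∃ R, Good W ι κ R ∧ ∀ s, WR W R s s → R (κ s) (κ s) := by
  have : Nonempty {R : Z → Z → Prop // Good W ι κ R} := ⟨⟨_, good_base hK⟩⟩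
  obtain ⟨⟨R, g⟩, hm⟩ := exists_maximal_of_nonempty_chains_bounded
    (α := {R : Z → Z → Prop // Good W ι κ R})
    (r := fun R R' => Ext R.1 R'.1) (by
      intro c hc hne
      obtain ⟨U, hU, hE⟩ := good_chain hW hK hG (Subtype.val '' c)
        (by rintro _ ⟨R, -, rfl⟩; exact R.2)
        (by
          rintro _ ⟨R, hR, rfl⟩ _ ⟨R', hR', rfl⟩
          by_cases e : R = R'
          · subst e; exact .inl (Ext.refl _)
          · exact hc hR hR' e)
        (hne.image _)
      exact ⟨⟨U, hU⟩, fun R hR => hE _ ⟨R, hR, rfl⟩⟩)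
    (fun h h' => Ext.trans h h')
  refine ⟨R, g, fun s hs => ?_⟩
  by_contra hn
  obtain ⟨R', g', e, h⟩ := good_step hW hK hG g hs hn
  exact hn ((hm ⟨R', g'⟩ e).1 _ _ h)

theorem iota_mono (hW : W.IsNormal) (hI : IsInitialKFP W X Z ι κ) (hG : Gen W ι κ)
    {x y : X} (hxy : x ≤ y) : ι x ≤ ι y := by
  have hK := hI.1
  obtain ⟨R, g, hR⟩ := good_max hW hK hG
  have hv : ∀ σ : W.obj (Car R g.pre),
      R (κ (W.map (val g.pre) (val_quasi g.pre) σ)) (κ (W.map (val g.pre) (val_quasi g.pre) σ)) :=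
    fun σ => hR _ ⟨g.pre, σ, σ, rfl, rfl, le_rfl⟩
  let ι' : X → Car R g.pre := fun x => ⟨ι x, (g.iota x x).2 le_rfl⟩
  let κ' : W.obj (Car R g.pre) → Car R g.pre := fun σ => ⟨_, hv σ⟩
  have hFP : IsKruskalFP W X (Car R g.pre) ι' κ' := by
    refine ⟨?_, ?_, ?_, ?_, ?_⟩
    · ext a
      simp only [Set.mem_inter_iff, Set.mem_range, Set.mem_empty_iff_false, iff_false]
      rintro ⟨⟨x, rfl⟩, s, h⟩
      exact ne_ik hK x _ (congrArg Subtype.val h)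
    · intro x y h
      exact (g.iota x y).1 h
    · intro x τ
      refine (g.kap _ _ (hv τ)).trans ?_
      rw [W.supp_natural]
      constructor
      · rintro (⟨_, ⟨z, hz, rfl⟩, h⟩ | ⟨s, e, -⟩)
        · exact ⟨z, hz, h⟩
        · exact absurd e.symm (ne_ik hK _ _)
      · rintro ⟨z, hz, h⟩
        exact .inl ⟨_, ⟨z, hz, rfl⟩, h⟩
    · intro s y h
      exact g.kapi _ _ h
    · intro σ τ
      refine (g.kap _ _ (hv τ)).trans ?_
      rw [W.supp_natural]
      constructor
      · rintro (⟨_, ⟨z, hz, rfl⟩, h⟩ | ⟨s, e, -, h⟩)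
        · exact .inr ⟨z, hz, h⟩
        · have := kinj hW hK hG e
          subst this
          obtain ⟨_, σ', τ', h1, h2, h3⟩ := h
          have e1 := QE_inj (W.map_quasiEmb _ (val_quasi g.pre)) h1
          have e2 := QE_inj (W.map_quasiEmb _ (val_quasi g.pre)) h2
          subst e1 e2
          exact .inl h3
      · rintro (h | ⟨z, hz, h⟩)
        · exact .inr ⟨_, rfl, hv σ, g.pre, σ, τ, rfl, rfl, h⟩
        · exact .inl ⟨_, ⟨z, hz, rfl⟩, h⟩
  obtain ⟨f, ⟨hf, hfi, -⟩, -⟩ := hI.2 _ _ _ hFP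
  apply hf
  have e : ∀ x, f (ι x) = ι' x := fun x => congrFun hfi x
  rw [e, e]
  exact (g.iota x y).2 hxy

/-- the generated part -/
inductive InGen (W : PODilator.{u}) {X Z : POrd.{u}} (ι : X → Z) (κ : W.obj Z → Z) : Z → Prop
  | iota (x : X) : InGen W ι κ (ι x)
  | kappa (s : W.obj Z) : (∀ z ∈ W.supp s, InGen W ι κ z) → InGen W ι κ (κ s)

theorem gen_of_initial (hI : IsInitialKFP W X Z ι κ) : Gen W ι κ := by
  have hK := hI.1
  let G : POrd.{u} := POrd.of {z : Z // InGen W ι κ z}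
  let j : G → Z := fun a => a.1
  have je : IsEmb j := fun a b => Iff.rfl
  have jq : QuasiEmb j := fun a b h => h
  have hv : ∀ σ : W.obj G, InGen W ι κ (κ (W.map j jq σ)) := by
    intro σ
    refine .kappa _ ?_
    rw [W.supp_natural]
    rintro _ ⟨z, -, rfl⟩
    exact z.2
  let ι' : X → G := fun x => ⟨ι x, .iota x⟩
  let κ' : W.obj G → G := fun σ => ⟨_, hv σ⟩
  have hFP : IsKruskalFP W X G ι' κ' := by
    refine ⟨?_, ?_, ?_, ?_, ?_⟩
    · ext a
      simp only [Set.mem_inter_iff, Set.mem_range, Set.mem_empty_iff_false, iff_false]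
      rintro ⟨⟨x, rfl⟩, s, h⟩
      exact ne_ik hK x _ (congrArg Subtype.val h)
    · intro x y h
      exact hK.iota_le x y h
    · intro x τ
      refine (hK.iota_kappa _ _).trans ?_
      rw [W.supp_natural]
      exact ⟨fun ⟨_, ⟨z, hz, e⟩, h⟩ => ⟨z, hz, by subst e; exact h⟩,
        fun ⟨z, hz, h⟩ => ⟨_, ⟨z, hz, rfl⟩, h⟩⟩
    · intro s y h
      exact hK.kappa_iota _ _ h
    · intro σ τ
      refine (hK.kappa_kappa _ _).trans ?_
      rw [W.supp_natural, ← W.map_emb j jq je σ τ]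
      refine or_congr Iff.rfl ?_
      exact ⟨fun ⟨_, ⟨z, hz, e⟩, h⟩ => ⟨z, hz, by subst e; exact h⟩,
        fun ⟨z, hz, h⟩ => ⟨_, ⟨z, hz, rfl⟩, h⟩⟩
  obtain ⟨f, ⟨hf, hfi, hfk⟩, -⟩ := hI.2 _ _ _ hFP
  have e : j ∘ f = id := by
    refine (hI.2 Z ι κ hK).unique ⟨hf.comp jq, ?_, ?_⟩ ⟨quasiEmb_id, rfl, ?_⟩
    · funext x
      exact congrArg j (congrFun hfi x)
    · rw [W.map_comp f j hf jq]
      funext s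
      exact congrArg j (congrFun hfk s)
    · rw [W.map_id]; rfl
  intro P h1 h2 z
  have hz : InGen W ι κ z := by
    have : (f z).1 = z := congrFun e z
    rw [← this]; exact (f z).2
  induction hz with
  | iota x => exact h1 x
  | kappa s _ ih => exact h2 s ih

def Stage (W : PODilator.{u}) {X Z : POrd.{u}} (ι : X → Z) (κ : W.obj Z → Z) : ℕ → Set Z
  | 0 => Set.range ι
  | n + 1 => Stage W ι κ n ∪ {z | ∃ s, z = κ s ∧ W.supp s ⊆ Stage W ι κ n}

theorem exists_height (hW : W.IsNormal) (hK : IsKruskalFP W X Z ι κ) (hG : Gen W ι κ) :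
    ∃ h : Z → ℕ, ∀ (s : W.obj Z), ∀ z ∈ W.supp s, h z < h (κ s) := by
  classical
  have mono : Monotone (Stage W ι κ) := monotone_nat_of_le_succ fun n => Set.subset_union_left
  have ex : ∀ z, ∃ n, z ∈ Stage W ι κ n := by
    refine hG _ (fun x => ⟨0, x, rfl⟩) ?_
    intro s ih
    have : ∃ N, ∀ z ∈ W.supp s, z ∈ Stage W ι κ N := by
      choose! n hn using ih
      obtain ⟨N, hN⟩ := ((W.supp_finite s).image n).bddAbove
      exact ⟨N, fun z hz => mono (hN ⟨z, hz, rfl⟩) (hn z hz)⟩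
    obtain ⟨N, hN⟩ := this
    exact ⟨N + 1, .inr ⟨s, rfl, hN⟩⟩
  refine ⟨fun z => Nat.find (ex z), fun s z hz => ?_⟩
  have hs := Nat.find_spec (ex (κ s))
  have hm := fun m => Nat.find_min (ex (κ s)) (m := m)
  change _ < Nat.find (ex (κ s))
  generalize Nat.find (ex (κ s)) = n at hs hm
  cases n with
  | zero =>
    obtain ⟨x, hx⟩ := hs
    exact absurd hx.symm (ne_ik hK _ _)
  | succ n =>
    rcases hs with hs | ⟨t, e, ht⟩
    · exact absurd hs (hm n (Nat.lt_succ_self n))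
    · obtain rfl := kinj hW hK hG e
      exact Nat.lt_succ_of_le (Nat.find_min' _ (ht hz))

end FP
end KD

/-- The Kruskal derivative of a normal WPO-dilator is a WPO-dilator. -/
theorem kruskalDeriv_isWPO (W T : PODilator.{u})
    (ι : ∀ X : POrd.{u}, X → T.obj X)
    (κ : ∀ X : POrd.{u}, W.obj (T.obj X) → T.obj X)
    (hWnormal : W.IsNormal) (hWwpo : W.IsWPO)
    (hD : IsKruskalDeriv W T ι κ) :
    T.IsWPO := by
  intro X hX
  have hI := hD.initial X
  have hK := hI.1
  have hG := KD.gen_of_initial hI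
  have hmono : ∀ {x y : X}, x ≤ y → ι X x ≤ ι X y := fun h => KD.iota_mono hWnormal hI hG h
  obtain ⟨h, hh⟩ := KD.exists_height hWnormal hK hG
  have hsp : ∀ z : T.obj X, (∃ x, z = ι X x) ∨ ∃ s, z = κ X s :=
    hG _ (fun x => .inl ⟨x, rfl⟩) (fun s _ => .inr ⟨s, rfl⟩)
  by_contra hbad
  have hbad' : ∃ f, Set.PartiallyWellOrderedOn.IsBadSeq (· ≤ ·)
      (Set.univ : Set (T.obj X)) f := by
    unfold IsWpo at hbad
    push Not at hbad
    obtain ⟨f, hf⟩ := hbad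
    exact ⟨f, fun _ => trivial, fun m n hmn => hf m n hmn⟩
  obtain ⟨f, ⟨-, hf⟩, hmin⟩ :=
    Set.PartiallyWellOrderedOn.exists_min_bad_of_exists_bad _ h _ hbad'
  have hsub : (∃ φ : ℕ → ℕ, StrictMono φ ∧ ∀ n, ∃ x, f (φ n) = ι X x) ∨
      ∃ φ : ℕ → ℕ, StrictMono φ ∧ ∀ n, ∃ s, f (φ n) = κ X s := by
    by_cases hfr : ∃ᶠ n in Filter.atTop, ∃ x, f n = ι X x
    · exact .inl (Filter.extraction_of_frequently_atTop hfr)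
    · refine .inr (Filter.extraction_of_eventually_atTop (P := fun n => ∃ s, f n = κ X s) ?_)
      rw [Filter.not_frequently] at hfr
      exact hfr.mono fun n hn => (hsp (f n)).resolve_left hn
  rcases hsub with ⟨φ, hφ, hx⟩ | ⟨φ, hφ, hs⟩
  · choose x hx using hx
    obtain ⟨i, j, hij, hle⟩ := hX x
    apply hf _ _ (hφ hij)
    rw [hx, hx]
    exact hmono hle
  · choose σ hσ using hs
    let B : POrd.{u} := POrd.of {z : T.obj X // ∃ n, z ∈ W.supp (σ n)}
    let e : B → T.obj X := fun a => a.1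
    have ee : IsEmb e := fun a b => Iff.rfl
    have eq : QuasiEmb e := fun a b h => h
    have hB : IsWpo B := by
      intro g
      by_contra hg
      push Not at hg
      choose m hm using fun k => (g k).2
      obtain ⟨k₀, hk₀⟩ : ∃ k₀, ∀ k, m k₀ ≤ m k :=
        ⟨Function.argmin m, fun k => Function.argmin_le m k⟩
      refine hmin (φ (m k₀))
        (fun n => if n < φ (m k₀) then f n else (g (k₀ + (n - φ (m k₀)))).1) ?_ ?_
        ⟨fun _ => trivial, ?_⟩
      · intro n hn
        simp [hn]
      · simp only [lt_irrefl, if_false, Nat.sub_self, Nat.add_zero]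
        rw [hσ]
        exact hh _ _ (hm k₀)
      · intro a b hab
        by_cases hb : b < φ (m k₀)
        · simp only [hb, hab.trans hb, if_true]
          exact hf _ _ hab
        · by_cases ha : a < φ (m k₀)
          · simp only [hb, ha, if_true, if_false]
            intro hle
            refine hf a (φ (m (k₀ + (b - φ (m k₀)))))
              (ha.trans_le (hφ.monotone (hk₀ _))) (hle.trans ?_)
            rw [hσ]
            exact KD.supp_le hK hG (hm _)
          · simp only [hb, ha, if_false]
            exact hg _ _ (by omega)
    have hl : ∀ n, ∃ τ, W.map e eq τ = σ n := fun n =>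
      W.supp_cond e eq ee (σ n) (fun z hz => ⟨⟨z, n, hz⟩, rfl⟩)
    choose τ hτ using hl
    obtain ⟨i, j, hij, hle⟩ := hWwpo B hB τ
    apply hf _ _ (hφ hij)
    rw [hσ, hσ]
    refine (hK.kappa_kappa _ _).2 (.inl ?_)
    rw [← hτ, ← hτ]
    exact (W.map_emb e eq ee _ _).1 hle
end

section
/- If η : V ⇒ W is a natural isomorphism between PO-dilators (V, supp^V) and (W, supp^W), then supp^W_X ∘ η_X = supp^V_X for every partial order X. -/
universe u

/-- Natural isomorphism of PO-dilators. -/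
def IsNatIso (V W : PODilator.{u}) (η : ∀ X : POrd.{u}, V.obj X → W.obj X) : Prop :=
  (∀ X : POrd.{u}, Function.Bijective (η X) ∧ IsEmb (η X)) ∧
  (∀ (X Y : POrd.{u}) (f : X → Y) (hf : QuasiEmb f), η Y ∘ V.map f hf = W.map f hf ∘ η X)

/-- Supports are automatically preserved by natural isomorphisms of PO-dilators. -/
theorem natIso_supp (V W : PODilator.{u}) (η : ∀ X : POrd.{u}, V.obj X → W.obj X)
    (hη : IsNatIso V W η) (X : POrd.{u}) (σ : V.obj X) :
    W.supp (η X σ) = V.supp σ := by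
  have key : ∀ a : Set X, ∃ (Z : POrd.{u}) (f : Z → X), IsEmb f ∧ Set.range f = a :=
    fun a => ⟨⟨a⟩, Subtype.val, fun _ _ => Iff.rfl, Subtype.range_val⟩
  obtain ⟨hb, hn⟩ := hη
  apply Set.Subset.antisymm
  · obtain ⟨Z, f, hf, hr⟩ := key (V.supp σ)
    have hq : QuasiEmb f := fun x y => (hf x y).2
    obtain ⟨τ, hτ⟩ := V.supp_cond f hq hf σ hr.ge
    have h := congrFun (hn Z X f hq) τ
    simp only [Function.comp_apply] at h
    rw [hτ] at h
    rw [h, W.supp_natural, ← hr]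
    exact Set.image_subset_range _ _
  · obtain ⟨Z, f, hf, hr⟩ := key (W.supp (η X σ))
    have hq : QuasiEmb f := fun x y => (hf x y).2
    obtain ⟨τ, hτ⟩ := W.supp_cond f hq hf (η X σ) hr.ge
    obtain ⟨ρ, rfl⟩ := (hb _).1.2 τ
    have h := congrFun (hn Z X f hq) ρ
    simp only [Function.comp_apply] at h
    have h2 := (hb X).1.1 (h.trans hτ)
    rw [← hr, ← h2, V.supp_natural]
    exact Set.image_subset_range _ _
end

section
/- For every n ∈ ℕ and every partial order X, the relation ≤_{T_n(X)} is a partial order on T_n(X), and s ≤_{T_n(X)} t implies h^n_X(s) ≤ h^n_X(t) for all s, t ∈ T_n(X). -/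
universe u

/-- Terms for labelled trees: leaves carry labels from `X`, inner nodes carry
natural number labels and a (multi)set of immediate subtrees, represented as a list. -/
inductive TTerm (X : Type u) : Type u
  | leaf : X → TTerm X
  | node : ℕ → List (TTerm X) → TTerm X

namespace TTerm

/-- All node labels are `< n`. -/
inductive Bdd (n : ℕ) {X : Type u} : TTerm X → Prop
  | leaf (x : X) : Bdd n (leaf x)
  | node {i : ℕ} {l : List (TTerm X)} : i < n → (∀ t ∈ l, Bdd n t) → Bdd n (node i l)

/-- The term is a leaf or has root label `0`. -/
def IsMinus {X : Type u} : TTerm X → Prop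
  | leaf _ => True
  | node i _ => i = 0

/-- The recursively defined gap order `≤_{T_n(X)}`, relative to a relation `r`
on the leaf labels.  Lists of subtrees are compared as multisets: via an
injection that relates corresponding entries. -/
inductive TLE {X : Type u} (r : X → X → Prop) : TTerm X → TTerm X → Prop
  | leaf {x y : X} : r x y → TLE r (leaf x) (leaf y)
  | leaf_sub {x : X} {j : ℕ} {l : List (TTerm X)} {t : TTerm X} :
      t ∈ l → TLE r (leaf x) t → TLE r (leaf x) (node j l)
  | node {i : ℕ} {l l' : List (TTerm X)} (g : Fin l.length → Fin l'.length) :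
      Function.Injective g → (∀ k, TLE r (l.get k) (l'.get (g k))) →
      TLE r (node i l) (node i l')
  | node_sub {i j : ℕ} {σ : List (TTerm X)} {l : List (TTerm X)} {t : TTerm X} :
      i ≤ j → t ∈ l → TLE r (node i σ) t → TLE r (node i σ) (node j l)

/-- Equality of terms as labelled trees with multisets of subtrees, relative to a
relation `e` identifying leaf labels. -/
inductive TEquiv {X : Type u} (e : X → X → Prop) : TTerm X → TTerm X → Prop
  | leaf {x y : X} : e x y → TEquiv e (leaf x) (leaf y)
  | node {i : ℕ} {l l' : List (TTerm X)} (g : Fin l.length → Fin l'.length) :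
      Function.Bijective g → (∀ k, TEquiv e (l.get k) (l'.get (g k))) →
      TEquiv e (node i l) (node i l')

/-- The height of a term. -/
def height {X : Type u} : TTerm X → ℕ
  | leaf _ => 0
  | node _ l => (l.attach.map (fun t => height t.1)).foldr (fun a b => max (a + 1) b) 0
decreasing_by
  have := List.sizeOf_lt_of_mem t.2
  simp only [TTerm.node.sizeOf_spec]
  omega

/-- The support of a term: the set of its leaf labels. -/
def suppT {X : Type u} : TTerm X → Set X
  | leaf x => {x}
  | node _ l => (l.attach.map (fun t => suppT t.1)).foldr (· ∪ ·) ∅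
decreasing_by
  have := List.sizeOf_lt_of_mem t.2
  simp only [TTerm.node.sizeOf_spec]
  omega

/-- The action of `T_n` on maps. -/
def tmap {X Y : Type u} (f : X → Y) : TTerm X → TTerm Y
  | leaf x => leaf (f x)
  | node i l => node i (l.attach.map (fun t => tmap f t.1))
decreasing_by
  have := List.sizeOf_lt_of_mem t.2
  simp only [TTerm.node.sizeOf_spec]
  omega

end TTerm

open TTerm

/-- `T_n(X)`: tree terms with labels bounded by `n` (lists representing multisets). -/
def Tn (n : ℕ) (X : Type u) : Type u := {t : TTerm X // TTerm.Bdd n t}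

/-- `T_n(X)` with terms that represent the same labelled tree (with multisets of
immediate subtrees) identified. -/
def TnQ (n : ℕ) (X : Type u) : Type u :=
  Quot (fun a b : Tn n X => TEquiv Eq a.1 b.1)

/-- The gap order on `T_n(X)`. -/
def TnQLE (n : ℕ) (X : Type u) [PartialOrder X] : TnQ n X → TnQ n X → Prop :=
  fun a b => ∃ s t : Tn n X, a = Quot.mk _ s ∧ b = Quot.mk _ t ∧ TLE (· ≤ ·) s.1 t.1

namespace TTerm

variable {X : Type u}

theorem TLE.refl [PartialOrder X] : ∀ t : TTerm X, TLE (· ≤ ·) t t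
  | .leaf _ => .leaf le_rfl
  | .node _ l => .node id Function.injective_id fun k => TLE.refl (l.get k)
termination_by t => sizeOf t
decreasing_by
  have := List.sizeOf_lt_of_mem (List.get_mem l k)
  simp only [TTerm.node.sizeOf_spec]
  omega

theorem TLE.label_le {r : X → X → Prop} {i j : ℕ} {l l' : List (TTerm X)}
    (h : TLE r (.node i l) (.node j l')) : i ≤ j := by
  cases h with
  | node => exact le_rfl
  | node_sub h => exact h

theorem TLE.trans' [PartialOrder X] {t u : TTerm X} (h : TLE (· ≤ ·) t u) :
    ∀ s, TLE (· ≤ ·) s t → TLE (· ≤ ·) s u := by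
  induction h with
  | leaf hxy =>
    intro s hs
    cases hs with
    | leaf h => exact .leaf (le_trans h hxy)
  | leaf_sub hm _ ih =>
    intro s hs
    have h2 := ih s hs
    cases hs with
    | leaf h => exact .leaf_sub hm h2
  | node g hg _ ih =>
    intro s hs
    cases hs with
    | leaf_sub hm h =>
      obtain ⟨k, rfl⟩ := List.get_of_mem hm
      exact .leaf_sub (List.get_mem _ _) (ih k _ h)
    | node g' hg' h' => exact .node (g ∘ g') (hg.comp hg') fun k => ih _ _ (h' k)
    | node_sub hij hm h =>
      obtain ⟨k, rfl⟩ := List.get_of_mem hm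
      exact .node_sub hij (List.get_mem _ _) (ih k _ h)
  | node_sub hij hm _ ih =>
    intro s hs
    have h2 := ih s hs
    cases s with
    | leaf x => exact .leaf_sub hm h2
    | node i' l' => exact .node_sub (hs.label_le.trans hij) hm h2

theorem height_node_le {i : ℕ} {l : List (TTerm X)} {h : ℕ} :
    height (.node i l) ≤ h ↔ ∀ t ∈ l, height t + 1 ≤ h := by
  rw [height, List.attach_map_val (f := height)]
  induction l with
  | nil => simp
  | cons a l ih => simp only [List.map_cons, List.foldr_cons, max_le_iff, ih, List.forall_mem_cons]

theorem height_lt_of_mem {i : ℕ} {l : List (TTerm X)} {t : TTerm X} (ht : t ∈ l) :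
    height t < height (.node i l) :=
  height_node_le.1 le_rfl t ht

theorem TLE.height_le {r : X → X → Prop} {s t : TTerm X} (h : TLE r s t) :
    height s ≤ height t := by
  induction h with
  | leaf => simp [height]
  | leaf_sub => simp [height]
  | node g hg _ ih =>
    rw [height_node_le]
    intro t ht
    obtain ⟨k, rfl⟩ := List.get_of_mem ht
    exact (ih k).trans_lt (height_lt_of_mem (List.get_mem _ _))
  | node_sub _ hm _ ih => exact ih.trans (height_lt_of_mem hm).le

theorem TEquiv.le [PartialOrder X] {s t : TTerm X} (h : TEquiv Eq s t) :
    TLE (· ≤ ·) s t ∧ TLE (· ≤ ·) t s := by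
  induction h with
  | leaf h => exact ⟨.leaf h.le, .leaf h.ge⟩
  | @node i l l' g hg _ ih =>
    refine ⟨.node g hg.1 fun k => (ih k).1, ?_⟩
    let e := Equiv.ofBijective g hg
    refine .node e.symm e.symm.injective fun k => ?_
    have := (ih (e.symm k)).2
    rwa [show g (e.symm k) = k from e.apply_symm_apply k] at this

theorem TLE.antisymm' [PartialOrder X] {s t : TTerm X} (h : TLE (· ≤ ·) s t) :
    TLE (· ≤ ·) t s → TEquiv Eq s t := by
  induction h with
  | leaf h =>
    intro h'
    cases h' with
    | leaf h' => exact .leaf (le_antisymm h h')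
  | leaf_sub => intro h'; cases h'
  | node_sub _ hm h _ =>
    intro h'
    have h1 := h.height_le
    have h2 := h'.height_le
    exact absurd (height_lt_of_mem hm) (not_lt.2 (h2.trans h1))
  | @node i l l' g hg h ih =>
    intro h'
    cases h' with
    | node_sub _ hm h' =>
      have h1 := (TLE.node (i := i) g hg h).height_le
      have h2 := h'.height_le
      exact absurd (height_lt_of_mem hm) (not_lt.2 (h1.trans h2))
    | node g' hg' h' =>
      have hc : l.length = l'.length := by
        have h1 := Fintype.card_le_of_injective g hg
        have h2 := Fintype.card_le_of_injective g' hg'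
        simp only [Fintype.card_fin] at h1 h2
        omega
      have hb : Function.Bijective g :=
        (Fintype.bijective_iff_injective_and_card g).2 ⟨hg, by simpa using hc⟩
      refine .node g hb fun k => ih k ?_
      have hpi : Function.Injective (g' ∘ g) := hg'.comp hg
      have step : ∀ m k, TLE (· ≤ ·) (l.get k) (l.get ((g' ∘ g)^[m] k)) := by
        intro m
        induction m with
        | zero => intro k; exact TLE.refl _
        | succ m ihm =>
          intro k
          rw [Function.iterate_succ_apply]
          exact (ihm _).trans' _ ((h' (g k)).trans' _ (h k))
      obtain ⟨m, hm, hk⟩ := Function.Injective.mem_periodicPts hpi k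
      obtain ⟨m, rfl⟩ := Nat.exists_eq_succ_of_ne_zero (Nat.pos_iff_ne_zero.1 hm)
      have hs := step m ((g' ∘ g) k)
      rw [← Function.iterate_succ_apply, hk.eq] at hs
      exact hs.trans' _ (h' (g k))

end TTerm

theorem tnq_exact (n : ℕ) (X : Type u) [PartialOrder X] {a b : Tn n X}
    (h : (Quot.mk _ a : TnQ n X) = Quot.mk _ b) :
    TLE (· ≤ ·) a.1 b.1 ∧ TLE (· ≤ ·) b.1 a.1 := by
  have h' := Quot.eqvGen_exact h
  clear h
  induction h' with
  | rel _ _ h => exact h.le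
  | refl => exact ⟨TLE.refl _, TLE.refl _⟩
  | symm _ _ _ ih => exact ih.symm
  | trans _ _ _ _ _ ih1 ih2 => exact ⟨ih2.1.trans' _ ih1.1, ih1.2.trans' _ ih2.2⟩

theorem tnqle_mk (n : ℕ) (X : Type u) [PartialOrder X] {a b : Tn n X} :
    TnQLE n X (Quot.mk _ a) (Quot.mk _ b) ↔ TLE (· ≤ ·) a.1 b.1 := by
  constructor
  · rintro ⟨s, t, h1, h2, h⟩
    exact (tnq_exact n X h2).2.trans' _ (h.trans' _ (tnq_exact n X h1).1)
  · intro h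
    exact ⟨a, b, rfl, rfl, h⟩

/-- The relation `≤_{T_n(X)}` is a partial order on `T_n(X)`, and `s ≤ t` implies
`height s ≤ height t`. -/
theorem tn_partialOrder_and_height (n : ℕ) (X : Type u) [PartialOrder X] :
    IsPartialOrder (TnQ n X) (TnQLE n X) ∧
    (∀ s t : TTerm X, TTerm.Bdd n s → TTerm.Bdd n t →
      TLE (· ≤ ·) s t → TTerm.height s ≤ TTerm.height t) := by
  refine ⟨{ refl := ?_, trans := ?_, antisymm := ?_ }, fun s t _ _ h => h.height_le⟩
  · rintro ⟨a⟩
    exact (tnqle_mk n X).2 (TLE.refl _)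
  · rintro ⟨a⟩ ⟨b⟩ ⟨c⟩ hab hbc
    exact (tnqle_mk n X).2 (((tnqle_mk n X).1 hbc).trans' _ ((tnqle_mk n X).1 hab))
  · rintro ⟨a⟩ ⟨b⟩ hab hba
    exact Quot.sound (((tnqle_mk n X).1 hab).antisymm' ((tnqle_mk n X).1 hba))
end

section
/- For every n ∈ ℕ, the transformations T_n and T_{n+1}^- preserve well partial orders: if X is a well partial order, then T_n(X) and T_{n+1}^-(X) are well partial orders. -/
universe u

open TTerm

/-- Well partial orders, for an explicit relation. -/
def IsWpoRel {X : Type u} (r : X → X → Prop) : Prop :=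
  ∀ f : ℕ → X, ∃ i j : ℕ, i < j ∧ r (f i) (f j)

namespace TTerm

theorem tle_refl {X : Type u} {r : X → X → Prop} (hr : ∀ x, r x x) : ∀ t : TTerm X, TLE r t t
  | leaf x => TLE.leaf (hr x)
  | node i l => TLE.node id Function.injective_id (fun k => tle_refl hr (l.get k))
decreasing_by
  have := List.sizeOf_lt_of_mem (List.get_mem l k)
  simp only [TTerm.node.sizeOf_spec]
  omega

theorem tle_label {X : Type u} {r : X → X → Prop} {i j : ℕ} {σ τ : List (TTerm X)}
    (h : TLE r (node i σ) (node j τ)) : i ≤ j := by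
  cases h with
  | node => exact le_rfl
  | node_sub h => exact h

theorem tle_trans {X : Type u} {r : X → X → Prop} (hr : ∀ x y z, r x y → r y z → r x z)
    {b c : TTerm X} (h2 : TLE r b c) : ∀ a, TLE r a b → TLE r a c := by
  induction h2 with
  | leaf h =>
    intro a h1
    cases h1 with
    | leaf h' => exact TLE.leaf (hr _ _ _ h' h)
  | leaf_sub ht _ ih =>
    intro a h1
    have := ih a h1
    cases h1 with
    | leaf h' => exact TLE.leaf_sub ht this
  | node g hg _ ih =>
    intro a h1
    cases h1 with
    | leaf_sub ht h' =>
      obtain ⟨k, rfl⟩ := List.get_of_mem ht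
      exact TLE.leaf_sub (List.get_mem _ (g k)) (ih k _ h')
    | node g' hg' h' =>
      exact TLE.node (g ∘ g') (hg.comp hg') (fun k => ih _ _ (h' k))
    | node_sub hij ht h' =>
      obtain ⟨k, rfl⟩ := List.get_of_mem ht
      exact TLE.node_sub hij (List.get_mem _ (g k)) (ih k _ h')
  | node_sub hij ht _ ih =>
    intro a h1
    have := ih a h1
    cases a with
    | leaf x => exact TLE.leaf_sub ht this
    | node i' σ' => exact TLE.node_sub ((tle_label h1).trans hij) ht this

instance tle_isPreorder {X : Type u} (r : X → X → Prop) [IsPreorder X r] :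
    IsPreorder (TTerm X) (TLE r) where
  refl := tle_refl (refl_of r)
  trans _ _ _ h1 h2 := tle_trans (r := r) (fun _ _ _ h h' => trans_of r h h') h2 _ h1

/-- A term that is a leaf or has root label `0` embeds into a node once it embeds into a child. -/
theorem tle_of_mem {X : Type u} {r : X → X → Prop} {s t : TTerm X} {j : ℕ} {l : List (TTerm X)}
    (hs : IsMinus s) (ht : t ∈ l) (h : TLE r s t) : TLE r s (node j l) := by
  cases s with
  | leaf x => exact TLE.leaf_sub ht h
  | node i σ =>
    have hi : i = 0 := hs
    exact TLE.node_sub (by omega) ht h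

/-- Higman embeddings give injections. -/
theorem exists_inj {A : Type u} {R : A → A → Prop} {l l' : List A}
    (h : List.SublistForall₂ R l l') :
    ∃ g : Fin l.length → Fin l'.length, Function.Injective g ∧
      ∀ k, R (l.get k) (l'.get (g k)) := by
  rw [List.sublistForall₂_iff] at h
  obtain ⟨m, h1, h2⟩ := h
  obtain ⟨f, hf⟩ := List.sublist_iff_exists_fin_orderEmbedding_get_eq.1 h2
  rw [List.forall₂_iff_get] at h1
  refine ⟨fun k => f (Fin.cast h1.1 k), fun a b hab => ?_, fun k => ?_⟩
  · have := f.injective hab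
    exact Fin.cast_injective _ this
  · rw [← hf]
    exact h1.2 k.1 k.2 (h1.1 ▸ k.2)

/-- Substitute the terms in `S` for the leaves and shift the other labels up by one. -/
def flat {X : Type u} {S : Set (TTerm X)} : TTerm S → TTerm X
  | leaf y => y.1
  | node i l => node (i + 1) (l.attach.map (fun t => flat t.1))
decreasing_by
  have := List.sizeOf_lt_of_mem t.2
  simp only [TTerm.node.sizeOf_spec]
  omega

theorem flat_leaf {X : Type u} {S : Set (TTerm X)} (y : S) : flat (leaf y) = y.1 := by
  rw [flat]

theorem flat_node {X : Type u} {S : Set (TTerm X)} (i : ℕ) (l : List (TTerm S)) :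
    flat (node i l) = node (i + 1) (l.map flat) := by
  rw [flat]
  simp

theorem node_map {X Y : Type u} {r : X → X → Prop} (F : Y → TTerm X) {i : ℕ} {l l' : List Y}
    (g : Fin l.length → Fin l'.length) (hg : Function.Injective g)
    (h : ∀ k, TLE r (F (l.get k)) (F (l'.get (g k)))) :
    TLE r (node i (l.map F)) (node i (l'.map F)) := by
  refine TLE.node (fun k => Fin.cast (by simp) (g (Fin.cast (by simp) k))) ?_ ?_
  · intro a b hab
    exact Fin.cast_injective _ (hg (Fin.cast_injective _ hab))
  · intro k
    simpa using h (Fin.cast (by simp) k)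

theorem flat_mono {X : Type u} {r : X → X → Prop} {S : Set (TTerm X)}
    (hS : ∀ y ∈ S, IsMinus y) {s t : TTerm S}
    (h : TLE (fun a b : S => TLE r a.1 b.1) s t) : TLE r (flat s) (flat t) := by
  induction h with
  | leaf h => simpa only [flat_leaf] using h
  | @leaf_sub x j l t ht _ ih =>
    rw [flat_node]
    refine tle_of_mem ?_ (List.mem_map_of_mem ht) ih
    rw [flat_leaf]
    exact hS _ x.2
  | node g hg _ ih =>
    rw [flat_node, flat_node]
    exact node_map flat g hg ih
  | node_sub hij ht _ ih =>
    rw [flat_node] at ih ⊢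
    rw [flat_node]
    exact TLE.node_sub (by omega) (List.mem_map_of_mem ht) ih

/-- `Supp y t`: `y` is a topmost subterm of `t` that is a leaf or has root label `0`. -/
inductive Supp {X : Type u} (y : TTerm X) : TTerm X → Prop
  | self : IsMinus y → Supp y y
  | child {i : ℕ} {l : List (TTerm X)} {t : TTerm X} : t ∈ l → Supp y t →
      Supp y (node (i + 1) l)

theorem Supp.minus {X : Type u} {y t : TTerm X} (h : Supp y t) : IsMinus y := by
  induction h with
  | self h => exact h
  | child _ _ ih => exact ih

theorem Supp.size {X : Type u} {y t : TTerm X} (h : Supp y t) : sizeOf y ≤ sizeOf t := by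
  induction h with
  | self h => exact le_rfl
  | child ht _ ih =>
    have := List.sizeOf_lt_of_mem ht
    simp only [TTerm.node.sizeOf_spec]
    omega

theorem Supp.bdd {X : Type u} {n : ℕ} {y t : TTerm X} (h : Supp y t) (ht : Bdd n t) :
    Bdd n y := by
  induction h with
  | self h => exact ht
  | child hm _ ih =>
    cases ht with
    | node _ h => exact ih (h _ hm)

theorem Supp.tle {X : Type u} {r : X → X → Prop} {s y t : TTerm X} (h : Supp y t)
    (hs : IsMinus s) (hsy : TLE r s y) : TLE r s t := by
  induction h with
  | self h => exact hsy
  | child hm _ ih => exact tle_of_mem hs hm ih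

theorem list_lift {A B : Type u} (F : A → B) (P : A → Prop) : ∀ l : List B,
    (∀ t ∈ l, ∃ s, P s ∧ F s = t) → ∃ L : List A, (∀ s ∈ L, P s) ∧ L.map F = l
  | [], _ => ⟨[], by simp, rfl⟩
  | b :: l, h => by
    obtain ⟨s, hs, rfl⟩ := h b (by simp)
    obtain ⟨L, hL, rfl⟩ := list_lift F P l (fun t ht => h t (by simp [ht]))
    refine ⟨s :: L, ?_, rfl⟩
    intro x hx
    rcases List.mem_cons.1 hx with rfl | hx
    · exact hs
    · exact hL _ hx

theorem exists_flat {X : Type u} {n : ℕ} {S : Set (TTerm X)} {t : TTerm X} (ht : Bdd (n + 1) t)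
    (h : ∀ y, Supp y t → y ∈ S) : ∃ s : TTerm S, Bdd n s ∧ flat s = t := by
  induction ht with
  | leaf x => exact ⟨leaf ⟨leaf x, h _ (Supp.self trivial)⟩, Bdd.leaf _, flat_leaf _⟩
  | @node i l hi hl ih =>
    cases i with
    | zero => exact ⟨leaf ⟨_, h _ (Supp.self rfl)⟩, Bdd.leaf _, flat_leaf _⟩
    | succ i =>
      obtain ⟨L, hL, rfl⟩ := list_lift flat (Bdd n) l
        (fun t ht => ih t ht (fun y hy => h y (Supp.child ht hy)))
      exact ⟨node i L, Bdd.node (by omega) hL, flat_node _ _⟩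

/-- `T_n` preserves well quasi orders. -/
def Pres (n : ℕ) : Prop :=
  ∀ (X : Type u) (r : X → X → Prop) [IsPreorder X r], WellQuasiOrdered r →
    {t : TTerm X | Bdd n t}.PartiallyWellOrderedOn (TLE r)

instance sub_isPreorder {X : Type u} (r : X → X → Prop) [IsPreorder X r] (S : Set (TTerm X)) :
    IsPreorder S (fun a b : S => TLE r a.1 b.1) where
  refl a := refl_of (TLE r) a.1
  trans _ _ _ h1 h2 := trans_of (TLE r) h1 h2

open Set.PartiallyWellOrderedOn in
theorem minus_step {n : ℕ} (hn : Pres.{u} n) (X : Type u) (r : X → X → Prop) [IsPreorder X r]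
    (hr : WellQuasiOrdered r) :
    {t : TTerm X | Bdd (n + 1) t ∧ IsMinus t}.PartiallyWellOrderedOn (TLE r) := by
  rw [iff_not_exists_isMinBadSeq sizeOf]
  rintro ⟨f, hf, hmin⟩
  let S : Set (TTerm X) := {y | ∃ k σ, f k = node 0 σ ∧ ∃ t ∈ σ, Supp y t}
  have hSm : ∀ y ∈ S, IsMinus y := by
    rintro y ⟨k, σ, _, t, _, h⟩
    exact h.minus
  have hS : S.PartiallyWellOrderedOn (TLE r) := by
    rw [iff_forall_not_isBadSeq]
    rintro g ⟨hgS, hgb⟩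
    choose φ σ hσ t ht hsupp using hgS
    obtain ⟨k0, hk0⟩ : ∃ k0, ∀ k, φ k0 ≤ φ k := by
      exact ⟨Function.argmin φ, fun k => Function.argmin_le φ k⟩
    refine hmin (φ k0) (fun m => if m < φ k0 then f m else g (k0 + (m - φ k0)))
      (fun m hm => (if_pos hm).symm) ?_ ⟨?_, ?_⟩
    · have h1 := (hsupp k0).size
      have h2 := List.sizeOf_lt_of_mem (ht k0)
      simp only [lt_irrefl, if_false, Nat.sub_self, Nat.add_zero]
      rw [hσ k0]
      simp only [TTerm.node.sizeOf_spec]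
      omega
    · intro m
      dsimp only
      split_ifs with hm
      · exact hf.1 m
      · refine ⟨?_, (hsupp _).minus⟩
        have := (hf.1 (φ (k0 + (m - φ k0)))).1
        rw [hσ] at this
        cases this with
        | node _ h => exact (hsupp _).bdd (h _ (ht _))
    · intro m k hmk
      dsimp only
      split_ifs with h1 h2 h2
      · exact hf.2 m k hmk
      · intro hle
        refine hf.2 m (φ (k0 + (k - φ k0))) (h1.trans_le (hk0 _)) ?_
        rw [hσ]
        exact tle_of_mem (hf.1 m).2 (ht _) ((hsupp _).tle (hf.1 m).2 hle)
      · omega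
      · exact hgb _ _ (by omega)
  have hL := partiallyWellOrderedOn_sublistForall₂ _ (hn S (fun a b : S => TLE r a.1 b.1) hS)
  have hB := hL.image_of_monotone_on (r' := TLE r) (f := fun L => node 0 (L.map flat))
    (by
      intro L _ L' _ h
      obtain ⟨g, hg, h⟩ := exists_inj h
      exact node_map flat g hg (fun k => flat_mono hSm (h k)))
  have hA := (Set.partiallyWellOrderedOn_univ_iff.2 hr).image_of_monotone_on (r' := TLE r)
    (f := leaf) (fun a _ b _ h => TLE.leaf h)
  obtain ⟨a, b, hab, h⟩ := (hA.union hB).exists_lt (f := f) (by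
    intro k
    have hk := hf.1 k
    cases hfk : f k with
    | leaf x => exact Or.inl ⟨x, trivial, rfl⟩
    | node i l =>
      right
      rw [hfk] at hk
      obtain ⟨hb, hi⟩ := hk
      have hi : i = 0 := hi
      subst hi
      cases hb with
      | node _ hb =>
        obtain ⟨L, hL, hLl⟩ := list_lift (flat (S := S)) (Bdd n) l
          (fun t ht => exists_flat (hb t ht) (fun y hy => ⟨k, l, hfk, t, ht, hy⟩))
        exact ⟨L, hL, by simp only [hLl]⟩)
  exact hf.2 a b hab h

theorem pres_all (n : ℕ) : Pres.{u} n := by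
  induction n with
  | zero =>
    intro X r _ hr
    refine ((Set.partiallyWellOrderedOn_univ_iff.2 hr).image_of_monotone_on (r' := TLE r)
      (f := leaf) (fun a _ b _ h => TLE.leaf h)).mono ?_
    intro t ht
    cases ht with
    | leaf x => exact ⟨x, trivial, rfl⟩
    | node h => omega
  | succ n ih =>
    intro X r _ hr
    have hM := minus_step ih X r hr
    refine ((ih _ (fun a b : {t : TTerm X | Bdd (n + 1) t ∧ IsMinus t} => TLE r a.1 b.1)
      hM).image_of_monotone_on (r' := TLE r) (f := flat)
      (fun a _ b _ h => flat_mono (fun y hy => hy.2) h)).mono ?_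
    intro t ht
    obtain ⟨s, hs, h⟩ := exists_flat (S := {t : TTerm X | Bdd (n + 1) t ∧ IsMinus t}) ht
      (fun y hy => ⟨hy.bdd ht, hy.minus⟩)
    exact ⟨s, hs, h⟩

end TTerm

/-- `T_n` and `T_{n+1}^-` preserve well partial orders. -/
theorem tn_tnMinus_preserve_wpo (n : ℕ) (X : Type u) [PartialOrder X]
    (hX : IsWpoRel ((· ≤ ·) : X → X → Prop)) :
    IsWpoRel (fun s t : {t : TTerm X // TTerm.Bdd n t} => TLE (· ≤ ·) s.1 t.1) ∧
    IsWpoRel (fun s t : {t : TTerm X // TTerm.Bdd (n + 1) t ∧ TTerm.IsMinus t} =>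
      TLE (· ≤ ·) s.1 t.1) := by
  exact ⟨pres_all n X _ hX, minus_step (pres_all n) X _ hX⟩
end
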